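/- arXiv:0909.2326 — 3 statements merged into one kernel-verified Lean document; each statement's English description precedes it below -/
import Mathlib

section
/- Let Ω ⊆ ℝ² be open and connected and let u₁, u₂ : Ω → ℝ be C² functions each satisfying the minimal surface equation on Ω. If u₁ ≤ u₂ on Ω and u₁(p) = u₂(p) for some p ∈ Ω, then u₁ = u₂ on all of Ω. -/
/-- Partial derivative in the first coordinate direction of a function on `ℝ²`. -/
noncomputable def pdx (u : ℝ × ℝ → ℝ) (p : ℝ × ℝ) : ℝ := fderiv ℝ u p (1, 0)

/-- Partial derivative in the second coordinate direction of a function on `ℝ²`. -/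
noncomputable def pdy (u : ℝ × ℝ → ℝ) (p : ℝ × ℝ) : ℝ := fderiv ℝ u p (0, 1)

/-- `u` satisfies the minimal surface equation
`(1 + u_y²) u_xx − 2 u_x u_y u_xy + (1 + u_x²) u_yy = 0` on `Ω`. -/
def SatisfiesMinimalSurfaceEquation (u : ℝ × ℝ → ℝ) (Ω : Set (ℝ × ℝ)) : Prop :=
  ∀ p ∈ Ω,
    (1 + pdy u p ^ 2) * pdx (pdx u) p - 2 * pdx u p * pdy u p * pdy (pdx u) p
      + (1 + pdx u p ^ 2) * pdy (pdy u) p = 0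

open Set Filter Topology

lemma line_deriv (f : ℝ × ℝ → ℝ) (y : ℝ × ℝ) (a b t : ℝ)
    (hf : DifferentiableAt ℝ f (y.1 + t * a, y.2 + t * b)) :
    HasDerivAt (fun t : ℝ => f (y.1 + t * a, y.2 + t * b))
      (a * pdx f (y.1 + t * a, y.2 + t * b) + b * pdy f (y.1 + t * a, y.2 + t * b)) t := by
  have h1 : HasDerivAt (fun t : ℝ => ((y.1 + t * a, y.2 + t * b) : ℝ × ℝ)) (a, b) t := by
    refine HasDerivAt.prodMk ?_ ?_
    · simpa using ((hasDerivAt_id t).mul_const a).const_add y.1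
    · simpa using ((hasDerivAt_id t).mul_const b).const_add y.2
  have h2 := hf.hasFDerivAt.comp_hasDerivAt t h1
  refine h2.congr_deriv ?_
  have : ((a, b) : ℝ × ℝ) = a • (1, 0) + b • (0, 1) := by ext <;> simp
  rw [this, map_add, map_smul, map_smul]
  simp [pdx, pdy]

lemma pdx_contDiffOn {Ω : Set (ℝ × ℝ)} (hΩ : IsOpen Ω) {f : ℝ × ℝ → ℝ} {m n : WithTop ℕ∞}
    (hmn : m + 1 ≤ n) (hf : ContDiffOn ℝ n f Ω) : ContDiffOn ℝ m (pdx f) Ω :=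
  (hf.fderiv_of_isOpen hΩ hmn).clm_apply contDiffOn_const

lemma pdy_contDiffOn {Ω : Set (ℝ × ℝ)} (hΩ : IsOpen Ω) {f : ℝ × ℝ → ℝ} {m n : WithTop ℕ∞}
    (hmn : m + 1 ≤ n) (hf : ContDiffOn ℝ n f Ω) : ContDiffOn ℝ m (pdy f) Ω :=
  (hf.fderiv_of_isOpen hΩ hmn).clm_apply contDiffOn_const

lemma pd_symm {Ω : Set (ℝ × ℝ)} (hΩ : IsOpen Ω) {f : ℝ × ℝ → ℝ}
    (hf : ContDiffOn ℝ 2 f Ω) {y : ℝ × ℝ} (hy : y ∈ Ω) : pdx (pdy f) y = pdy (pdx f) y := by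
  have hc : ContDiffAt ℝ 2 f y := hf.contDiffAt (hΩ.mem_nhds hy)
  have hs := hc.isSymmSndFDerivAt (by simp)
  have hd : DifferentiableAt ℝ (fderiv ℝ f) y :=
    ((hf.fderiv_of_isOpen hΩ (m := 1) (by norm_num)).differentiableOn (by norm_num)).differentiableAt
      (hΩ.mem_nhds hy)
  have key : ∀ v w : ℝ × ℝ, fderiv ℝ (fun p => fderiv ℝ f p v) y w
      = fderiv ℝ (fderiv ℝ f) y w v := by
    intro v w
    rw [fderiv_clm_apply hd (differentiableAt_const v)]
    simp
  have e1 : pdx (pdy f) y = fderiv ℝ (fderiv ℝ f) y (1, 0) (0, 1) := key _ _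
  have e2 : pdy (pdx f) y = fderiv ℝ (fderiv ℝ f) y (0, 1) (1, 0) := key _ _
  rw [e1, e2]
  exact hs _ _

lemma second_test {φ φ' : ℝ → ℝ} {m : ℝ} (hmin : IsLocalMin φ 0)
    (h1 : ∀ᶠ t in 𝓝 (0 : ℝ), HasDerivAt φ (φ' t) t) (h2 : HasDerivAt φ' m 0) :
    φ' 0 = 0 ∧ 0 ≤ m := by
  have h0 : φ' 0 = 0 := hmin.hasDerivAt_eq_zero h1.self_of_nhds
  refine ⟨h0, ?_⟩
  by_contra hm
  push Not at hm
  have hde : deriv φ =ᶠ[𝓝 0] φ' := h1.mono fun t ht => ht.deriv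
  have hdd : deriv (deriv φ) 0 = m := by rw [hde.deriv_eq, h2.deriv]
  have hmax : IsLocalMax φ 0 := isLocalMax_of_deriv_deriv_neg (by rw [hdd]; exact hm)
    (by rw [h1.self_of_nhds.deriv, h0]) h1.self_of_nhds.continuousAt
  have hconst : φ =ᶠ[𝓝 0] fun _ => φ 0 := by
    filter_upwards [hmin, hmax] with t ht1 ht2
    exact le_antisymm ht2 ht1
  have : deriv φ =ᶠ[𝓝 0] fun _ => (0 : ℝ) := by
    have := hconst.deriv
    simpa using this
  rw [this.deriv_eq] at hdd
  simp at hdd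
  linarith

lemma line_second {Ω : Set (ℝ × ℝ)} (hΩ : IsOpen Ω) {f : ℝ × ℝ → ℝ}
    (hf : ContDiffOn ℝ 2 f Ω) {y : ℝ × ℝ} (hy : y ∈ Ω) (a b : ℝ) :
    (∀ᶠ t in 𝓝 (0 : ℝ), HasDerivAt (fun t : ℝ => f (y.1 + t * a, y.2 + t * b))
      (a * pdx f (y.1 + t * a, y.2 + t * b) + b * pdy f (y.1 + t * a, y.2 + t * b)) t) ∧
    HasDerivAt (fun t : ℝ => a * pdx f (y.1 + t * a, y.2 + t * b)
        + b * pdy f (y.1 + t * a, y.2 + t * b))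
      (a ^ 2 * pdx (pdx f) y + 2 * a * b * pdy (pdx f) y + b ^ 2 * pdy (pdy f) y) 0 := by
  constructor
  · have hc : ContinuousAt (fun t : ℝ => ((y.1 + t * a, y.2 + t * b) : ℝ × ℝ)) 0 := by fun_prop
    have : ∀ᶠ t in 𝓝 (0 : ℝ), ((y.1 + t * a, y.2 + t * b) : ℝ × ℝ) ∈ Ω :=
      hc.eventually_mem (hΩ.mem_nhds (by simpa using hy))
    filter_upwards [this] with t ht
    exact line_deriv f y a b t
      ((hf.differentiableOn (by norm_num)).differentiableAt (hΩ.mem_nhds ht))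
  · have dx : DifferentiableAt ℝ (pdx f) y :=
      ((pdx_contDiffOn hΩ (m := 1) (by norm_num) hf).differentiableOn
        (by norm_num)).differentiableAt (hΩ.mem_nhds hy)
    have dy : DifferentiableAt ℝ (pdy f) y :=
      ((pdy_contDiffOn hΩ (m := 1) (by norm_num) hf).differentiableOn
        (by norm_num)).differentiableAt (hΩ.mem_nhds hy)
    have ex := line_deriv (pdx f) y a b 0 (by simpa using dx)
    have ey := line_deriv (pdy f) y a b 0 (by simpa using dy)
    refine ((ex.const_mul a).add (ey.const_mul b)).congr_deriv ?_
    simp only [zero_mul, add_zero, Prod.mk.eta]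
    rw [pd_symm hΩ hf hy]
    ring

lemma barrier_line (α X Y a b : ℝ) :
    (∀ t : ℝ, HasDerivAt (fun t : ℝ => Real.exp (-α * ((X + t * a) ^ 2 + (Y + t * b) ^ 2)))
      (Real.exp (-α * ((X + t * a) ^ 2 + (Y + t * b) ^ 2))
        * (-2 * α * (a * (X + t * a) + b * (Y + t * b)))) t) ∧
    HasDerivAt (fun t : ℝ => Real.exp (-α * ((X + t * a) ^ 2 + (Y + t * b) ^ 2))
        * (-2 * α * (a * (X + t * a) + b * (Y + t * b))))
      (Real.exp (-α * (X ^ 2 + Y ^ 2)) *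
        (4 * α ^ 2 * (a * X + b * Y) ^ 2 - 2 * α * (a ^ 2 + b ^ 2))) 0 := by
  have hx : ∀ t : ℝ, HasDerivAt (fun t : ℝ => X + t * a) a t := fun t => by
    simpa using ((hasDerivAt_id t).mul_const a).const_add X
  have hy : ∀ t : ℝ, HasDerivAt (fun t : ℝ => Y + t * b) b t := fun t => by
    simpa using ((hasDerivAt_id t).mul_const b).const_add Y
  have h1 : ∀ t : ℝ, HasDerivAt (fun t : ℝ => Real.exp (-α * ((X + t * a) ^ 2 + (Y + t * b) ^ 2)))
      (Real.exp (-α * ((X + t * a) ^ 2 + (Y + t * b) ^ 2))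
        * (-2 * α * (a * (X + t * a) + b * (Y + t * b)))) t := by
    intro t
    have h : HasDerivAt (fun t : ℝ => -α * ((X + t * a) ^ 2 + (Y + t * b) ^ 2))
        (-2 * α * (a * (X + t * a) + b * (Y + t * b))) t := by
      refine ((((hx t).pow 2).add ((hy t).pow 2)).const_mul (-α)).congr_deriv ?_
      norm_num
      ring
    exact h.exp
  refine ⟨h1, ?_⟩
  refine ((h1 0).mul ((((hx 0).const_mul a).add ((hy 0).const_mul b)).const_mul
    (-2 * α))).congr_deriv ?_
  simp only [zero_mul, add_zero, Pi.add_apply]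
  ring

lemma touch_test {Ω : Set (ℝ × ℝ)} (hΩ : IsOpen Ω) {u₁ u₂ : ℝ × ℝ → ℝ}
    (h₁ : ContDiffOn ℝ 2 u₁ Ω) (h₂ : ContDiffOn ℝ 2 u₂ Ω) {y : ℝ × ℝ} (hy : y ∈ Ω)
    (x : ℝ × ℝ) (α ε k : ℝ)
    (hmin : IsLocalMin (fun q : ℝ × ℝ => u₂ q - u₁ q
      - ε * (Real.exp (-α * ((q.1 - x.1) ^ 2 + (q.2 - x.2) ^ 2)) - k)) y) (a b : ℝ) :
    (a * pdx u₂ y + b * pdy u₂ y) - (a * pdx u₁ y + b * pdy u₁ y)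
      - ε * (Real.exp (-α * ((y.1 - x.1) ^ 2 + (y.2 - x.2) ^ 2))
        * (-2 * α * (a * (y.1 - x.1) + b * (y.2 - x.2)))) = 0 ∧
    0 ≤ (a ^ 2 * pdx (pdx u₂) y + 2 * a * b * pdy (pdx u₂) y + b ^ 2 * pdy (pdy u₂) y)
      - (a ^ 2 * pdx (pdx u₁) y + 2 * a * b * pdy (pdx u₁) y + b ^ 2 * pdy (pdy u₁) y)
      - ε * (Real.exp (-α * ((y.1 - x.1) ^ 2 + (y.2 - x.2) ^ 2)) *
        (4 * α ^ 2 * (a * (y.1 - x.1) + b * (y.2 - x.2)) ^ 2 - 2 * α * (a ^ 2 + b ^ 2))) := by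
  obtain ⟨p1, q1⟩ := line_second hΩ h₁ hy a b
  obtain ⟨p2, q2⟩ := line_second hΩ h₂ hy a b
  obtain ⟨p3, q3⟩ := barrier_line α (y.1 - x.1) (y.2 - x.2) a b
  have hc : ContinuousAt (fun t : ℝ => ((y.1 + t * a, y.2 + t * b) : ℝ × ℝ)) 0 := by fun_prop
  have hy0 : ((y.1 + 0 * a, y.2 + 0 * b) : ℝ × ℝ) = y := by simp
  have hmin' : IsLocalMin (fun t : ℝ => u₂ (y.1 + t * a, y.2 + t * b) - u₁ (y.1 + t * a, y.2 + t * b)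
      - ε * (Real.exp (-α * (((y.1 - x.1) + t * a) ^ 2 + ((y.2 - x.2) + t * b) ^ 2)) - k)) 0 := by
    have hm : Tendsto (fun t : ℝ => ((y.1 + t * a, y.2 + t * b) : ℝ × ℝ)) (𝓝 0) (𝓝 y) := by
      have := hc.tendsto
      rwa [hy0] at this
    filter_upwards [hm.eventually hmin] with t ht
    simp only [zero_mul, add_zero, Prod.mk.eta] at ht ⊢
    have e1 : y.1 - x.1 + t * a = y.1 + t * a - x.1 := by ring
    have e2 : y.2 - x.2 + t * b = y.2 + t * b - x.2 := by ring
    rw [e1, e2]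
    exact ht
  have := second_test hmin' (φ' := fun t =>
      (a * pdx u₂ (y.1 + t * a, y.2 + t * b) + b * pdy u₂ (y.1 + t * a, y.2 + t * b))
      - (a * pdx u₁ (y.1 + t * a, y.2 + t * b) + b * pdy u₁ (y.1 + t * a, y.2 + t * b))
      - ε * (Real.exp (-α * (((y.1 - x.1) + t * a) ^ 2 + ((y.2 - x.2) + t * b) ^ 2))
        * (-2 * α * (a * ((y.1 - x.1) + t * a) + b * ((y.2 - x.2) + t * b))))) (by
      filter_upwards [p1, p2] with t t1 t2
      exact (t2.sub t1).sub (((p3 t).sub_const k).const_mul ε)) ((q2.sub q1).sub (q3.const_mul ε))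
  simpa only [zero_mul, add_zero, Prod.mk.eta] using this

/-- Hopf boundary-type contradiction: the zero set of the difference cannot be touched
by a disc on which the difference is positive. -/
lemma no_touch {Ω : Set (ℝ × ℝ)} (hΩ : IsOpen Ω) {u₁ u₂ : ℝ × ℝ → ℝ}
    (h₁ : ContDiffOn ℝ 2 u₁ Ω) (h₂ : ContDiffOn ℝ 2 u₂ Ω)
    (hmse₁ : SatisfiesMinimalSurfaceEquation u₁ Ω)
    (hmse₂ : SatisfiesMinimalSurfaceEquation u₂ Ω)
    (hle : ∀ p ∈ Ω, u₁ p ≤ u₂ p) (z x : ℝ × ℝ) (hz : z ∈ Ω) (hzeq : u₁ z = u₂ z)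
    (hzx : 0 < (z.1 - x.1) ^ 2 + (z.2 - x.2) ^ 2)
    (hpos : ∀ y ∈ Ω, y ≠ z →
      (y.1 - x.1) ^ 2 + (y.2 - x.2) ^ 2 ≤ (z.1 - x.1) ^ 2 + (z.2 - x.2) ^ 2 → u₁ y < u₂ y) :
    False := by
  set R := (z.1 - x.1) ^ 2 + (z.2 - x.2) ^ 2 with hR
  have hev : ∀ᶠ y in 𝓝 z, y ∈ Ω ∧ R / 2 < (y.1 - x.1) ^ 2 + (y.2 - x.2) ^ 2 := by
    refine Filter.Eventually.and (hΩ.mem_nhds hz) ?_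
    have hc : ContinuousAt (fun y : ℝ × ℝ => (y.1 - x.1) ^ 2 + (y.2 - x.2) ^ 2) z := by fun_prop
    exact hc.eventually (lt_mem_nhds (by show R / 2 < R; linarith))
  obtain ⟨ρ, hρ, hball⟩ := Metric.nhds_basis_closedBall.mem_iff.1 hev
  have hsub : Metric.closedBall z ρ ⊆ Ω := fun y hy => (hball hy).1
  -- continuity
  have cx1 := (pdx_contDiffOn hΩ (m := 1) (by norm_num) h₁)
  have cx2 := (pdx_contDiffOn hΩ (m := 1) (by norm_num) h₂)
  have cy1 := (pdy_contDiffOn hΩ (m := 1) (by norm_num) h₁)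
  have cy2 := (pdy_contDiffOn hΩ (m := 1) (by norm_num) h₂)
  have cxx := (pdx_contDiffOn hΩ (m := 0) (by norm_num) cx1).continuousOn
  have cxy := (pdy_contDiffOn hΩ (m := 0) (by norm_num) cx1).continuousOn
  have cyy := (pdy_contDiffOn hΩ (m := 0) (by norm_num) cy1).continuousOn
  replace cx1 := cx1.continuousOn
  replace cx2 := cx2.continuousOn
  replace cy1 := cy1.continuousOn
  replace cy2 := cy2.continuousOn
  have hX : ContinuousOn (fun y : ℝ × ℝ => y.1 - x.1) Ω := by fun_prop
  have hY : ContinuousOn (fun y : ℝ × ℝ => y.2 - x.2) Ω := by fun_prop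
  have hG : ContinuousOn (fun y : ℝ × ℝ => 2 + pdx u₂ y ^ 2 + pdy u₂ y ^ 2
      + ((pdx u₂ y + pdx u₁ y) * pdy (pdy u₁) y - 2 * pdy u₁ y * pdy (pdx u₁) y) * (y.1 - x.1)
      + ((pdy u₂ y + pdy u₁ y) * pdx (pdx u₁) y - 2 * pdx u₂ y * pdy (pdx u₁) y) * (y.2 - x.2))
      Ω := by
    fun_prop
  have hcomp : IsCompact (Metric.closedBall z ρ) := isCompact_closedBall z ρ
  obtain ⟨M, hM⟩ := hcomp.bddAbove_image (hG.mono hsub)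
  obtain ⟨α, hα0, hαM⟩ : ∃ α : ℝ, 0 < α ∧ M < α * R := by
    refine ⟨(|M| + 1) / R, by positivity, ?_⟩
    rw [div_mul_cancel₀ _ hzx.ne']
    linarith [le_abs_self M]
  -- epsilon
  have cw : ContinuousOn (fun y => u₂ y - u₁ y) Ω := h₂.continuousOn.sub h₁.continuousOn
  obtain ⟨ε, hε, hεw⟩ : ∃ ε : ℝ, 0 < ε ∧ ∀ y ∈ Metric.sphere z ρ,
      (y.1 - x.1) ^ 2 + (y.2 - x.2) ^ 2 ≤ R → ε < u₂ y - u₁ y := by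
    have hS : IsCompact (Metric.sphere z ρ ∩ {y : ℝ × ℝ | (y.1 - x.1) ^ 2 + (y.2 - x.2) ^ 2 ≤ R}) :=
      (isCompact_sphere z ρ).inter_right (isClosed_le (by fun_prop) (by fun_prop))
    rcases Set.eq_empty_or_nonempty
      (Metric.sphere z ρ ∩ {y : ℝ × ℝ | (y.1 - x.1) ^ 2 + (y.2 - x.2) ^ 2 ≤ R}) with he | hne
    · refine ⟨1, one_pos, fun y hy hy2 => ?_⟩
      have : y ∈ (∅ : Set (ℝ × ℝ)) := he ▸ ⟨hy, hy2⟩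
      exact this.elim
    · obtain ⟨m, hm, hmm⟩ := hS.exists_isMinOn hne
        (cw.mono fun y hy => hsub (Metric.sphere_subset_closedBall hy.1))
      have hmp : u₁ m < u₂ m := hpos m (hsub (Metric.sphere_subset_closedBall hm.1))
        (Metric.ne_of_mem_sphere hm.1 hρ.ne') hm.2
      refine ⟨(u₂ m - u₁ m) / 2, by linarith, fun y hy hy2 => ?_⟩
      have : u₂ m - u₁ m ≤ u₂ y - u₁ y := hmm ⟨hy, hy2⟩
      linarith
  -- minimum
  let F : ℝ × ℝ → ℝ := fun q => u₂ q - u₁ q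
      - ε * (Real.exp (-α * ((q.1 - x.1) ^ 2 + (q.2 - x.2) ^ 2)) - Real.exp (-α * R))
  have hF : ContinuousOn F (Metric.closedBall z ρ) := by
    refine (cw.mono hsub).sub (Continuous.continuousOn ?_)
    fun_prop
  obtain ⟨y, hy, hymin⟩ := hcomp.exists_isMinOn ⟨z, Metric.mem_closedBall_self hρ.le⟩ hF
  have hFz : F z = 0 := by simp [F, hzeq, hR]
  have hFy : F y ≤ 0 := hFz ▸ hymin (Metric.mem_closedBall_self hρ.le)
  have hyball : y ∈ Metric.ball z ρ := by
    rcases (Metric.mem_closedBall.1 hy).lt_or_eq with h | h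
    · exact h
    · exfalso
      have hsph : y ∈ Metric.sphere z ρ := h
      by_cases hc : (y.1 - x.1) ^ 2 + (y.2 - x.2) ^ 2 ≤ R
      · have h1 := hεw y hsph hc
        have h2 : Real.exp (-α * ((y.1 - x.1) ^ 2 + (y.2 - x.2) ^ 2)) ≤ 1 := by
          rw [Real.exp_le_one_iff]
          have : 0 ≤ α * ((y.1 - x.1) ^ 2 + (y.2 - x.2) ^ 2) := by positivity
          linarith
        have h3 := Real.exp_pos (-α * R)
        have h4 : ε * (Real.exp (-α * ((y.1 - x.1) ^ 2 + (y.2 - x.2) ^ 2)) - Real.exp (-α * R))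
          ≤ ε * 1 := mul_le_mul_of_nonneg_left (by linarith) hε.le
        simp only [F] at hFy
        linarith
      · push Not at hc
        have h1 := hle y (hsub hy)
        have h2 : Real.exp (-α * ((y.1 - x.1) ^ 2 + (y.2 - x.2) ^ 2)) < Real.exp (-α * R) := by
          rw [Real.exp_lt_exp]
          have := mul_lt_mul_of_pos_left hc hα0
          linarith
        have h4 : 0 < ε * (Real.exp (-α * R)
          - Real.exp (-α * ((y.1 - x.1) ^ 2 + (y.2 - x.2) ^ 2))) := mul_pos hε (by linarith)
        simp only [F] at hFy
        linarith
  have hyΩ := hsub hy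
  have hloc : IsLocalMin F y := hymin.isLocalMin
    (mem_of_superset (Metric.isOpen_ball.mem_nhds hyball) Metric.ball_subset_closedBall)
  have T := touch_test hΩ h₁ h₂ hyΩ x α ε (Real.exp (-α * R)) hloc
  have T1 := T 1 0
  have T2 := T 0 1
  have T3 := (T (pdy u₂ y) (-pdx u₂ y)).2
  have E1 := hmse₁ y hyΩ
  have E2 := hmse₂ y hyΩ
  have hs := (hball hy).2
  have hMy := hM ⟨y, hy, rfl⟩
  simp only at hMy
  have he := Real.exp_pos (-α * ((y.1 - x.1) ^ 2 + (y.2 - x.2) ^ 2))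
  generalize Real.exp (-α * ((y.1 - x.1) ^ 2 + (y.2 - x.2) ^ 2)) = e at *
  generalize y.1 - x.1 = X at *
  generalize y.2 - x.2 = Y at *
  generalize pdx (pdx u₁) y = r1 at *
  generalize pdx (pdx u₂) y = r2 at *
  generalize pdy (pdx u₁) y = s1 at *
  generalize pdy (pdx u₂) y = s2 at *
  generalize pdy (pdy u₁) y = t1 at *
  generalize pdy (pdy u₂) y = t2 at *
  generalize pdx u₁ y = p1 at *
  generalize pdx u₂ y = p2 at *
  generalize pdy u₁ y = q1 at *
  generalize pdy u₂ y = q2 at *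
  obtain ⟨T1a, T1b⟩ := T1
  obtain ⟨T2a, T2b⟩ := T2
  clear T
  have hG' : 2 + p2 ^ 2 + q2 ^ 2 + ((p2 + p1) * t1 - 2 * q1 * s1) * X
      + ((q2 + q1) * r1 - 2 * p2 * s1) * Y < 2 * α * (X ^ 2 + Y ^ 2) := by
    have := mul_lt_mul_of_pos_left hs hα0
    linarith
  have hp : p1 = p2 + 2 * ε * e * α * X := by linarith
  have hq : q1 = q2 + 2 * ε * e * α * Y := by linarith
  have hfac : 0 < 2 * α * ε * e := by positivity
  have hprod := mul_lt_mul_of_pos_left hG' hfac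
  have hsq : 0 ≤ ε * e * (4 * α ^ 2 * (q2 * X - p2 * Y) ^ 2) := by positivity
  -- first-order part
  have hlin : (q2 ^ 2 - q1 ^ 2) * r1 - 2 * (p2 * q2 - p1 * q1) * s1 + (p2 ^ 2 - p1 ^ 2) * t1
      = -(2 * α * ε * e) * (((p2 + p1) * t1 - 2 * q1 * s1) * X
      + ((q2 + q1) * r1 - 2 * p2 * s1) * Y) := by
    have a1 : p2 - p1 = -(2 * α * ε * e) * X := by linarith
    have a2 : q2 - q1 = -(2 * α * ε * e) * Y := by linarith
    linear_combination ((p2 + p1) * t1 - 2 * q1 * s1) * a1 + ((q2 + q1) * r1 - 2 * p2 * s1) * a2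
  clear hp hq T1a T2a
  nlinarith

lemma local_zero {Ω : Set (ℝ × ℝ)} (hΩ : IsOpen Ω) {u₁ u₂ : ℝ × ℝ → ℝ}
    (h₁ : ContDiffOn ℝ 2 u₁ Ω) (h₂ : ContDiffOn ℝ 2 u₂ Ω)
    (hmse₁ : SatisfiesMinimalSurfaceEquation u₁ Ω)
    (hmse₂ : SatisfiesMinimalSurfaceEquation u₂ Ω)
    (hle : ∀ p ∈ Ω, u₁ p ≤ u₂ p) (p : ℝ × ℝ) (hp : p ∈ Ω) (hpeq : u₁ p = u₂ p) :
    ∀ᶠ x in 𝓝 p, u₁ x = u₂ x := by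
  obtain ⟨r', hr', hsub'⟩ := Metric.nhds_basis_closedBall.mem_iff.1 (hΩ.mem_nhds hp)
  obtain ⟨r, hr, hr4⟩ : ∃ r : ℝ, 0 < r ∧ r' = 4 * r := ⟨r' / 4, by positivity, by ring⟩
  subst hr4
  filter_upwards [Metric.ball_mem_nhds p hr] with x hx
  by_contra hne
  have cb : ∀ (y : ℝ × ℝ), |y.1 - p.1| ≤ 4 * r → |y.2 - p.2| ≤ 4 * r →
      y ∈ Metric.closedBall p (4 * r) := by
    intro y h1 h2
    rw [Metric.mem_closedBall, Prod.dist_eq, Real.dist_eq, Real.dist_eq]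
    exact max_le h1 h2
  rw [Metric.mem_ball, Prod.dist_eq, Real.dist_eq, Real.dist_eq, max_lt_iff] at hx
  obtain ⟨hx1, hx2⟩ := hx
  have cw : ContinuousOn (fun y => u₂ y - u₁ y) (Metric.closedBall p (4 * r)) :=
    (h₂.continuousOn.sub h₁.continuousOn).mono hsub'
  have hK : IsCompact (Metric.closedBall p (4 * r) ∩ (fun y => u₂ y - u₁ y) ⁻¹' {0}) :=
    (isCompact_closedBall p (4 * r)).of_isClosed_subset
      (cw.preimage_isClosed_of_isClosed Metric.isClosed_closedBall isClosed_singleton)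
      inter_subset_left
  have hpK : p ∈ Metric.closedBall p (4 * r) ∩ (fun y => u₂ y - u₁ y) ⁻¹' {0} :=
    ⟨Metric.mem_closedBall_self (by positivity), by simp [hpeq]⟩
  obtain ⟨z, hz, hzmin⟩ := hK.exists_isMinOn ⟨p, hpK⟩
    (f := fun y : ℝ × ℝ => (y.1 - x.1) ^ 2 + (y.2 - x.2) ^ 2) (by fun_prop)
  have hzp : (z.1 - x.1) ^ 2 + (z.2 - x.2) ^ 2 ≤ (p.1 - x.1) ^ 2 + (p.2 - x.2) ^ 2 := hzmin hpK
  have hzeq : u₁ z = u₂ z := by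
    have : u₂ z - u₁ z = 0 := hz.2
    linarith
  have hpx : (p.1 - x.1) ^ 2 + (p.2 - x.2) ^ 2 ≤ 2 * r ^ 2 := by
    have a1 := sq_lt_sq' (abs_lt.1 hx1).1 (abs_lt.1 hx1).2
    have a2 := sq_lt_sq' (abs_lt.1 hx2).1 (abs_lt.1 hx2).2
    nlinarith
  have hzx : 0 < (z.1 - x.1) ^ 2 + (z.2 - x.2) ^ 2 := by
    by_contra hcon
    have e1 : z.1 - x.1 = 0 := by nlinarith [sq_nonneg (z.1 - x.1), sq_nonneg (z.2 - x.2)]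
    have e2 : z.2 - x.2 = 0 := by nlinarith [sq_nonneg (z.1 - x.1), sq_nonneg (z.2 - x.2)]
    have : z = x := Prod.ext (by linarith) (by linarith)
    exact hne (this ▸ hzeq)
  refine no_touch hΩ h₁ h₂ hmse₁ hmse₂ hle z ((x.1 + z.1) / 2, (x.2 + z.2) / 2) (hsub' hz.1) hzeq
    (by simp only; nlinarith) ?_
  intro y hyΩ hyz hy
  simp only at hy
  have hbpos : 0 < (y.1 - z.1) ^ 2 + (y.2 - z.2) ^ 2 := by
    by_contra hcon
    have e1 : y.1 - z.1 = 0 := by nlinarith [sq_nonneg (y.1 - z.1), sq_nonneg (y.2 - z.2)]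
    have e2 : y.2 - z.2 = 0 := by nlinarith [sq_nonneg (y.1 - z.1), sq_nonneg (y.2 - z.2)]
    exact hyz (Prod.ext (by linarith) (by linarith))
  have hlt : (y.1 - x.1) ^ 2 + (y.2 - x.2) ^ 2 < (z.1 - x.1) ^ 2 + (z.2 - x.2) ^ 2 := by
    nlinarith
  have b1 : |y.1 - x.1| ≤ 2 * r := abs_le_of_sq_le_sq (by nlinarith [sq_nonneg (y.2 - x.2)]) (by positivity)
  have b2 : |y.2 - x.2| ≤ 2 * r := abs_le_of_sq_le_sq (by nlinarith [sq_nonneg (y.1 - x.1)]) (by positivity)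
  have hyb : y ∈ Metric.closedBall p (4 * r) := by
    apply cb
    · have := abs_add_le (y.1 - x.1) (x.1 - p.1)
      rw [sub_add_sub_cancel] at this
      linarith
    · have := abs_add_le (y.2 - x.2) (x.2 - p.2)
      rw [sub_add_sub_cancel] at this
      linarith
  refine lt_of_le_of_ne (hle y hyΩ) fun hyeq => ?_
  have : (z.1 - x.1) ^ 2 + (z.2 - x.2) ^ 2 ≤ (y.1 - x.1) ^ 2 + (y.2 - x.2) ^ 2 :=
    hzmin ⟨hyb, by simp [hyeq]⟩
  linarith

/-- Interior maximum principle for minimal graphs: if two solutions of the minimal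
surface equation on an open connected set satisfy `u₁ ≤ u₂` and touch at an interior
point, they coincide. -/
theorem interior_maximum_principle_for_minimal_graphs
    (Ω : Set (ℝ × ℝ)) (hΩ : IsOpen Ω) (hconn : IsConnected Ω)
    (u₁ u₂ : ℝ × ℝ → ℝ)
    (h₁ : ContDiffOn ℝ 2 u₁ Ω) (h₂ : ContDiffOn ℝ 2 u₂ Ω)
    (hmse₁ : SatisfiesMinimalSurfaceEquation u₁ Ω)
    (hmse₂ : SatisfiesMinimalSurfaceEquation u₂ Ω)
    (hle : ∀ p ∈ Ω, u₁ p ≤ u₂ p)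
    (p : ℝ × ℝ) (hp : p ∈ Ω) (heq : u₁ p = u₂ p) :
    Set.EqOn u₁ u₂ Ω := by
  have hopen : IsOpen {x | x ∈ Ω ∧ u₁ x = u₂ x} := by
    rw [isOpen_iff_mem_nhds]
    rintro x ⟨hx, hxe⟩
    exact Filter.Eventually.and (hΩ.mem_nhds hx) (local_zero hΩ h₁ h₂ hmse₁ hmse₂ hle x hx hxe)
  have hopen2 : IsOpen (Ω ∩ (fun y => u₂ y - u₁ y) ⁻¹' {0}ᶜ) :=
    (h₂.continuousOn.sub h₁.continuousOn).isOpen_inter_preimage hΩ isOpen_compl_singleton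
  intro q hq
  by_contra hne
  obtain ⟨x, -, ⟨-, hx1⟩, -, hx2⟩ := hconn.isPreconnected _ _ hopen hopen2
    (fun x hx => by
      by_cases h : u₁ x = u₂ x
      · exact Or.inl ⟨hx, h⟩
      · exact Or.inr ⟨hx, fun h0 => h (by
          have : u₂ x - u₁ x = 0 := h0
          linarith)⟩)
    ⟨p, hp, hp, heq⟩ ⟨q, hq, hq, fun h0 => hne (by
      have : u₂ q - u₁ q = 0 := h0
      linarith)⟩
  exact hx2 (by simp [hx1])
end

section
/- (Bernstein's theorem) Let u : ℝ² → ℝ be a C² function satisfying the minimal surface equation on all of ℝ². Then u is affine: there exist a, b, c ∈ ℝ such that u(x, y) = a·x + b·y + c for all (x, y) ∈ ℝ². -/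
open Filter Topology Set

/-- The linear functional `(x, y) ↦ a x + b y`. -/
noncomputable def lin (a b : ℝ) : ℝ × ℝ →L[ℝ] ℝ :=
  a • ContinuousLinearMap.fst ℝ ℝ ℝ + b • ContinuousLinearMap.snd ℝ ℝ ℝ

lemma lin_apply (a b : ℝ) (v : ℝ × ℝ) : lin a b v = a * v.1 + b * v.2 := by
  simp [lin]

lemma lin_eq (L : ℝ × ℝ →L[ℝ] ℝ) : L = lin (L (1, 0)) (L (0, 1)) := by
  ext <;> simp [lin_apply]

lemma continuous_lin {a b : ℝ × ℝ → ℝ} (ha : Continuous a) (hb : Continuous b) :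
    Continuous fun z => lin (a z) (b z) := by
  unfold lin; fun_prop

lemma poincare_plane (A B : ℝ × ℝ → ℝ) (A' B' : ℝ × ℝ → ℝ × ℝ →L[ℝ] ℝ)
    (hA : ∀ z, HasFDerivAt A (A' z) z) (hB : ∀ z, HasFDerivAt B (B' z) z)
    (h : ∀ z, A' z (0, 1) = B' z (1, 0)) :
    ∃ F : ℝ × ℝ → ℝ, ∀ z, HasFDerivAt F (lin (A z) (B z)) z := by
  have hω : ∀ z, HasFDerivAt (fun z => lin (A z) (B z))
      ((A' z).smulRight (ContinuousLinearMap.fst ℝ ℝ ℝ)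
        + (B' z).smulRight (ContinuousLinearMap.snd ℝ ℝ ℝ)) z := fun z =>
    ((hA z).smul_const (ContinuousLinearMap.fst ℝ ℝ ℝ)).add
      ((hB z).smul_const (ContinuousLinearMap.snd ℝ ℝ ℝ))
  obtain ⟨F, hF⟩ := (convex_univ (𝕜 := ℝ) (E := ℝ × ℝ)).exists_forall_hasFDerivAt_of_fderiv_symmetric
    (ω := fun z => lin (A z) (B z)) isOpen_univ
    (fun z _ => (hω z).differentiableAt.differentiableWithinAt) (by
      intro a _ x y
      rw [(hω a).fderiv]
      rw [lin_eq (A' a), lin_eq (B' a), h a]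
      simp [lin_apply]
      ring)
  exact ⟨F, fun z => hF z (mem_univ _)⟩

section Lewy

/-- The derivative of the Lewy map. -/
noncomputable def lewyCLM (a b c d : ℝ) : ℝ × ℝ →L[ℝ] ℂ :=
  Complex.equivRealProdCLM.symm.toContinuousLinearMap.comp ((lin a b).prod (lin c d))

lemma lewyCLM_apply (a b c d : ℝ) (v : ℝ × ℝ) :
    lewyCLM a b c d v = ⟨a * v.1 + b * v.2, c * v.1 + d * v.2⟩ := by
  apply Complex.ext <;> simp [lewyCLM, lin_apply]

lemma lewyCLM_eq (a b c d : ℝ) : lewyCLM a b c d = a • lewyCLM 1 0 0 0 + b • lewyCLM 0 1 0 0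
    + c • lewyCLM 0 0 1 0 + d • lewyCLM 0 0 0 1 := by
  apply ContinuousLinearMap.ext
  intro v
  apply Complex.ext <;> simp [lewyCLM_apply]

lemma continuous_lewyCLM {a b c d : ℝ × ℝ → ℝ} (ha : Continuous a) (hb : Continuous b)
    (hc : Continuous c) (hd : Continuous d) :
    Continuous fun z => lewyCLM (a z) (b z) (c z) (d z) := by
  simp_rw [fun z => lewyCLM_eq (a z) (b z) (c z) (d z)]
  fun_prop

/-- The Lewy derivative as an equivalence. -/
noncomputable def lewyEquiv (r s t : ℝ) (hD : (1 + r) * (1 + t) - s ^ 2 ≠ 0) : (ℝ × ℝ) ≃L[ℝ] ℂ :=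
  ContinuousLinearEquiv.equivOfInverse (lewyCLM (1 + r) s s (1 + t))
    (((lin ((1 + t) / ((1 + r) * (1 + t) - s ^ 2)) (-s / ((1 + r) * (1 + t) - s ^ 2))).prod
      (lin (-s / ((1 + r) * (1 + t) - s ^ 2)) ((1 + r) / ((1 + r) * (1 + t) - s ^ 2)))).comp
      Complex.equivRealProdCLM.toContinuousLinearMap)
    (by
      intro v
      set D := (1 + r) * (1 + t) - s ^ 2 with hDD
      apply Prod.ext
      · simp [lewyCLM_apply, lin_apply]; clear_value D; field_simp; subst hDD; ring
      · simp [lewyCLM_apply, lin_apply]; clear_value D; field_simp; subst hDD; ring)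
    (by
      intro v
      set D := (1 + r) * (1 + t) - s ^ 2 with hDD
      apply Complex.ext
      · simp [lewyCLM_apply, lin_apply]; clear_value D; field_simp; subst hDD; ring
      · simp [lewyCLM_apply, lin_apply]; clear_value D; field_simp; subst hDD; ring)

lemma monotone_seg (F : ℝ × ℝ → ℝ) (G : ℝ × ℝ → ℝ) (r s t : ℝ × ℝ → ℝ)
    (hF : ∀ z, HasFDerivAt F (lin (r z) (s z)) z)
    (hG : ∀ z, HasFDerivAt G (lin (s z) (t z)) z)
    (hdet : ∀ z, r z * t z - s z ^ 2 = 1) (hr : ∀ z, 0 < r z) (a b : ℝ × ℝ) :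
    0 ≤ (b.1 - a.1) * (F b - F a) + (b.2 - a.2) * (G b - G a) := by
  set v : ℝ × ℝ := b - a with hv
  have hl : ∀ τ : ℝ, HasDerivAt (fun τ : ℝ => a + τ • v) v τ := fun τ => by
    simpa using ((hasDerivAt_id τ).smul_const v).const_add a
  have hφ : ∀ τ : ℝ, HasDerivAt (fun τ : ℝ => v.1 * F (a + τ • v) + v.2 * G (a + τ • v))
      (v.1 * lin (r (a + τ • v)) (s (a + τ • v)) v + v.2 * lin (s (a + τ • v)) (t (a + τ • v)) v) τ :=
    fun τ => (((hF _).comp_hasDerivAt τ (hl τ)).const_mul _).add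
      (((hG _).comp_hasDerivAt τ (hl τ)).const_mul _)
  have hmono : Monotone (fun τ : ℝ => v.1 * F (a + τ • v) + v.2 * G (a + τ • v)) := by
    refine monotone_of_deriv_nonneg (fun τ => (hφ τ).differentiableAt) fun τ => ?_
    rw [(hφ τ).deriv, lin_apply, lin_apply]
    set z := a + τ • v
    have h1 := hdet z
    have h2 := hr z
    have : 0 ≤ r z * (v.1 * (r z * v.1 + s z * v.2) + v.2 * (s z * v.1 + t z * v.2)) := by
      have : r z * (v.1 * (r z * v.1 + s z * v.2) + v.2 * (s z * v.1 + t z * v.2))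
        = (r z * v.1 + s z * v.2) ^ 2 + (r z * t z - s z ^ 2) * v.2 ^ 2 := by ring
      rw [this, h1]; positivity
    exact nonneg_of_mul_nonneg_right this h2
  have := hmono (zero_le_one)
  simp only [zero_smul, one_smul, add_zero, hv, add_sub_cancel] at this
  simp only [Prod.fst_sub, Prod.snd_sub] at this
  linarith

theorem jorgens (F : ℝ × ℝ → ℝ) (G : ℝ × ℝ → ℝ) (r s t : ℝ × ℝ → ℝ)
    (hF : ∀ z, HasFDerivAt F (lin (r z) (s z)) z)
    (hG : ∀ z, HasFDerivAt G (lin (s z) (t z)) z)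
    (cr : Continuous r) (cs : Continuous s) (ct : Continuous t)
    (hdet : ∀ z, r z * t z - s z ^ 2 = 1) (hr : ∀ z, 0 < r z) (ht : ∀ z, 0 < t z) (z w : ℝ × ℝ) :
    r z = r w ∧ s z = s w ∧ t z = t w := by
  set T : ℝ × ℝ → ℂ := fun z => ⟨z.1 + F z, z.2 + G z⟩ with hT
  set S : ℝ × ℝ → ℂ := fun z => ⟨z.1 - F z, G z - z.2⟩ with hS
  have hTd : ∀ z, HasFDerivAt T (lewyCLM (1 + r z) (s z) (s z) (1 + t z)) z := by
    intro z
    have h1 : HasFDerivAt (fun z : ℝ × ℝ => z.1 + F z) (lin (1 + r z) (s z)) z := by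
      convert! (hasFDerivAt_fst (𝕜 := ℝ) (p := z)).add (hF z) using 1
      ext <;> simp [lin_apply]
    have h2 : HasFDerivAt (fun z : ℝ × ℝ => z.2 + G z) (lin (s z) (1 + t z)) z := by
      convert! (hasFDerivAt_snd (𝕜 := ℝ) (p := z)).add (hG z) using 1
      ext <;> simp [lin_apply]
    exact (Complex.equivRealProdCLM.symm.hasFDerivAt).comp z (h1.prodMk h2)
  have hSd : ∀ z, HasFDerivAt S (lewyCLM (1 - r z) (-s z) (s z) (t z - 1)) z := by
    intro z
    have h1 : HasFDerivAt (fun z : ℝ × ℝ => z.1 - F z) (lin (1 - r z) (-s z)) z := by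
      convert! (hasFDerivAt_fst (𝕜 := ℝ) (p := z)).sub (hF z) using 1
      ext <;> simp [lin_apply]
    have h2 : HasFDerivAt (fun z : ℝ × ℝ => G z - z.2) (lin (s z) (t z - 1)) z := by
      convert! (hG z).sub (hasFDerivAt_snd (𝕜 := ℝ) (p := z)) using 1
      ext <;> simp [lin_apply]
    exact (Complex.equivRealProdCLM.symm.hasFDerivAt).comp z (h1.prodMk h2)
  have hD : ∀ z, (1 + r z) * (1 + t z) - s z ^ 2 ≠ 0 := fun z => by
    have := hdet z; have := hr z; have := ht z
    apply ne_of_gt; nlinarith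
  have hTc : Continuous T := continuous_iff_continuousAt.2 fun z => (hTd z).continuousAt
  -- expanding
  have hanti : AntilipschitzWith 1 T := by
    refine AntilipschitzWith.of_le_mul_dist fun a b => ?_
    have hm := monotone_seg F G r s t hF hG hdet hr a b
    rw [NNReal.coe_one, one_mul, dist_comm a b, dist_comm (T a), Complex.dist_eq, Prod.dist_eq,
      Complex.norm_def, Complex.normSq_apply]
    simp only [hT, Complex.sub_re, Complex.sub_im, Real.dist_eq]
    apply max_le
    · apply Real.abs_le_sqrt
      nlinarith [sq_nonneg (F b - F a), sq_nonneg (G b - G a), sq_nonneg (b.2 - a.2)]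
    · apply Real.abs_le_sqrt
      nlinarith [sq_nonneg (F b - F a), sq_nonneg (G b - G a), sq_nonneg (b.1 - a.1)]
  have hTs : ∀ z, HasStrictFDerivAt T
      (lewyEquiv (r z) (s z) (t z) (hD z) : ℝ × ℝ →L[ℝ] ℂ) z := by
    intro z
    refine hasStrictFDerivAt_of_hasFDerivAt_of_continuousAt (f' := fun z =>
      lewyCLM (1 + r z) (s z) (s z) (1 + t z)) (Eventually.of_forall hTd) ?_
    exact (continuous_lewyCLM (continuous_const.add cr) cs cs (continuous_const.add ct)).continuousAt
  have hopen : IsOpenMap T := isOpenMap_iff_nhds_le.2 fun z => (hTs z).map_nhds_eq_of_equiv.ge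
  have hproper : IsProperMap T := by
    rw [isProperMap_iff_tendsto_cocompact]
    refine ⟨hTc, ?_⟩
    rw [← Metric.cobounded_eq_cocompact, ← Metric.cobounded_eq_cocompact]
    exact hanti.tendsto_cobounded
  have hsurj : Function.Surjective T := by
    rw [← range_eq_univ]
    exact IsClopen.eq_univ ⟨hproper.isClosedMap.isClosed_range, hopen.isOpen_range⟩
      (range_nonempty T)
  obtain ⟨g, hg⟩ := hsurj.hasRightInverse
  have hgT : ∀ z, g (T z) = z := fun z => hanti.injective (hg _)
  have hgc : Continuous g := by
    refine LipschitzWith.continuous (K := 1) (hanti.to_rightInverse hg)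
  set c : ℝ × ℝ → ℂ := fun z => ⟨(t z - r z) / (2 + r z + t z), 2 * s z / (2 + r z + t z)⟩ with hc
  have hder : ∀ w, HasDerivAt (S ∘ g) (c (g w)) w := by
    intro w
    have h1 : HasFDerivAt g _ w := HasFDerivAt.of_local_left_inverse hgc.continuousAt
      (hTs (g w)).hasFDerivAt (Eventually.of_forall hg)
    have h2 := (hSd (g w)).comp w h1
    rw [hasDerivAt_iff_hasFDerivAt]
    refine hasFDerivAt_of_restrictScalars ℝ h2 ?_
    apply ContinuousLinearMap.ext
    intro v
    obtain ⟨x, rfl⟩ := (lewyEquiv (r (g w)) (s (g w)) (t (g w)) (hD (g w))).surjective v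
    simp only [ContinuousLinearMap.comp_apply, ContinuousLinearEquiv.coe_coe,
      ContinuousLinearEquiv.symm_apply_apply]
    set y := g w
    have e : lewyEquiv (r y) (s y) (t y) (hD y) x
      = ⟨(1 + r y) * x.1 + s y * x.2, s y * x.1 + (1 + t y) * x.2⟩ := lewyCLM_apply _ _ _ _ _
    rw [e, lewyCLM_apply]
    have h3 : 2 + r y + t y ≠ 0 := by linarith [hr y, ht y]
    have h4 : t y * r y = 1 + s y ^ 2 := by linarith [hdet y]
    apply Complex.ext
    · simp [hc]; field_simp; linear_combination (2 * x.1) * h4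
    · simp [hc]; field_simp; linear_combination (-2 * x.2) * h4
  have hdiff : Differentiable ℂ (S ∘ g) := fun w => (hder w).differentiableAt
  have hderiv : deriv (S ∘ g) = fun w => c (g w) := funext fun w => (hder w).deriv
  have hsq : ∀ y, ((t y - r y) / (2 + r y + t y)) ^ 2 + (2 * s y / (2 + r y + t y)) ^ 2
      = 1 - 4 / (2 + r y + t y) := fun y => by
    have h3 : 2 + r y + t y ≠ 0 := by linarith [hr y, ht y]
    field_simp
    linear_combination (-4) * hdet y
  have hdc : Differentiable ℂ (fun w => c (g w)) := by
    rw [← hderiv]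
    exact (hdiff.contDiff (n := 2)).differentiable_deriv_two
  have hb : Bornology.IsBounded (range fun w => c (g w)) := by
    rw [isBounded_iff_forall_norm_le]
    refine ⟨1, ?_⟩
    rintro _ ⟨w, rfl⟩
    rw [Complex.norm_def, Complex.normSq_apply, Real.sqrt_le_iff]
    have := hsq (g w)
    have h5 : 0 < 4 / (2 + r (g w) + t (g w)) := by
      have := hr (g w); have := ht (g w); positivity
    simp only [hc]
    constructor <;> nlinarith
  have key := hdc.apply_eq_apply_of_bounded hb (T z) (T w)
  simp only [hgT] at key
  have k1 := congrArg Complex.re key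
  have k2 := congrArg Complex.im key
  simp only [hc] at k1 k2
  have k3 := hsq z
  rw [k1, k2, hsq w] at k3
  have pz : 0 < 2 + r z + t z := by linarith [hr z, ht z]
  have pw : 0 < 2 + r w + t w := by linarith [hr w, ht w]
  have k4 : 2 + r z + t z = 2 + r w + t w := by
    field_simp at k3
    linarith
  rw [k4] at k1 k2
  field_simp at k1 k2
  refine ⟨by linarith, by linarith, by linarith⟩

end Lewy

lemma const_of_sq (p : ℝ × ℝ → ℝ) (hp : Continuous p) (h : ∀ z w, p z ^ 2 = p w ^ 2) (z w : ℝ × ℝ) :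
    p z = p w := by
  by_contra hne
  have h1 : p z = - p w := (sq_eq_sq_iff_eq_or_eq_neg.1 (h z w)).resolve_left hne
  have : (0 : ℝ) ∈ range p := by
    have hpre := (isPreconnected_range hp).ordConnected
    rcases le_total 0 (p w) with h0 | h0
    · exact hpre.out (mem_range_self z) (mem_range_self w) ⟨by linarith, h0⟩
    · exact hpre.out (mem_range_self w) (mem_range_self z) ⟨h0, by linarith⟩
  obtain ⟨y, hy⟩ := this
  have h2 := h z y
  have h3 := h w y
  rw [hy] at h2 h3
  simp at h2 h3
  exact hne (by rw [h2, h3])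

/-- Bernstein's theorem: a `C²` solution of the minimal surface equation
`(1 + u_y²) u_xx − 2 u_x u_y u_xy + (1 + u_x²) u_yy = 0` on all of `ℝ²` is affine. -/
theorem bernstein_theorem
    (u : ℝ × ℝ → ℝ) (hu : ContDiff ℝ 2 u)
    (hmse : ∀ p : ℝ × ℝ,
      (1 + pdy u p ^ 2) * pdx (pdx u) p - 2 * pdx u p * pdy u p * pdy (pdx u) p
        + (1 + pdx u p ^ 2) * pdy (pdy u) p = 0) :
    ∃ a b c : ℝ, ∀ x y : ℝ, u (x, y) = a * x + b * y + c := by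
  have hfd : ContDiff ℝ 1 (fderiv ℝ u) := hu.fderiv_right (by norm_num)
  have hp1 : ContDiff ℝ 1 (pdx u) := hfd.clm_apply contDiff_const
  have hq1 : ContDiff ℝ 1 (pdy u) := hfd.clm_apply contDiff_const
  have hsymm : ∀ z, pdx (pdy u) z = pdy (pdx u) z := by
    intro z
    have hs := (hu.contDiffAt (x := z)).isSymmSndFDerivAt (by simp)
    have hd : DifferentiableAt ℝ (fderiv ℝ u) z := hfd.differentiable (by norm_num) z
    have e1 : ∀ v w : ℝ × ℝ, fderiv ℝ (fun y => fderiv ℝ u y v) z w = fderiv ℝ (fderiv ℝ u) z w v := by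
      intro v w
      rw [fderiv_clm_apply hd (differentiableAt_const v)]
      simp
    show fderiv ℝ (fun y => fderiv ℝ u y (0, 1)) z (1, 0) = fderiv ℝ (fun y => fderiv ℝ u y (1, 0)) z (0, 1)
    rw [e1, e1]
    exact hs _ _
  set p := pdx u with hp
  set q := pdy u with hq
  have dp : ∀ z, HasFDerivAt p (lin (pdx p z) (pdy p z)) z := fun z => by
    have := (hp1.differentiable (by norm_num) z).hasFDerivAt
    rwa [lin_eq (fderiv ℝ p z)] at this
  have dq : ∀ z, HasFDerivAt q (lin (pdx q z) (pdy q z)) z := fun z => by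
    have := (hq1.differentiable (by norm_num) z).hasFDerivAt
    rwa [lin_eq (fderiv ℝ q z)] at this
  have hpos : ∀ z, 0 < 1 + p z ^ 2 + q z ^ 2 := fun z => by positivity
  set W : ℝ × ℝ → ℝ := fun z => Real.sqrt (1 + p z ^ 2 + q z ^ 2) with hW
  have Wpos : ∀ z, 0 < W z := fun z => Real.sqrt_pos.2 (hpos z)
  have Wsq : ∀ z, W z ^ 2 = 1 + p z ^ 2 + q z ^ 2 := fun z => Real.sq_sqrt (hpos z).le
  have dW : ∀ z, HasFDerivAt W (lin ((p z * pdx p z + q z * pdx q z) / W z)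
      ((p z * pdy p z + q z * pdy q z) / W z)) z := fun z => by
    have := ((((dp z).pow 2).const_add 1).add ((dq z).pow 2)).sqrt (hpos z).ne'
    convert! this using 1
    have := Wpos z
    change _ = (1 / (2 * W z)) • _
    ext <;> simp [lin_apply] <;> field_simp
  have hdiv : ∀ (n : ℝ × ℝ → ℝ) (z : ℝ × ℝ) (a b : ℝ), HasFDerivAt n (lin a b) z →
      HasFDerivAt (fun z => n z / W z)
        (lin ((a * W z ^ 2 - n z * (p z * pdx p z + q z * pdx q z)) / W z ^ 3)
          ((b * W z ^ 2 - n z * (p z * pdy p z + q z * pdy q z)) / W z ^ 3)) z := by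
    intro n z a b hn
    have hWz := Wpos z
    have := hn.mul ((hasDerivAt_inv hWz.ne').comp_hasFDerivAt z (dW z))
    simp only [div_eq_mul_inv (n _)]
    convert! this using 1
    ext <;> simp [lin_apply] <;> field_simp <;> ring
  have d1 : ∀ z, HasFDerivAt (fun z => 1 + p z ^ 2)
      (lin (2 * p z * pdx p z) (2 * p z * pdy p z)) z := fun z => by
    convert! ((dp z).pow 2).const_add 1 using 1
    ext <;> simp [lin_apply]
  have d3 : ∀ z, HasFDerivAt (fun z => 1 + q z ^ 2)
      (lin (2 * q z * pdx q z) (2 * q z * pdy q z)) z := fun z => by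
    convert! ((dq z).pow 2).const_add 1 using 1
    ext <;> simp [lin_apply]
  have d2 : ∀ z, HasFDerivAt (fun z => p z * q z)
      (lin (p z * pdx q z + q z * pdx p z) (p z * pdy q z + q z * pdy p z)) z := fun z => by
    convert! (dp z).mul (dq z) using 1
    ext <;> simp [lin_apply]
  have dr := fun z => hdiv _ z _ _ (d1 z)
  have ds := fun z => hdiv _ z _ _ (d2 z)
  have dt := fun z => hdiv _ z _ _ (d3 z)
  obtain ⟨F, hF⟩ := poincare_plane _ _ _ _ dr ds (fun z => by
    have := Wpos z
    simp only [lin_apply, mul_zero, mul_one, zero_add, add_zero]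
    rw [Wsq, hsymm]
    congr 1
    linear_combination (-q z) * hmse z)
  obtain ⟨G, hG⟩ := poincare_plane _ _ _ _ ds dt (fun z => by
    have := Wpos z
    simp only [lin_apply, mul_zero, mul_one, zero_add, add_zero]
    rw [Wsq, hsymm]
    congr 1
    linear_combination (p z) * hmse z)
  have cW : Continuous W := continuous_iff_continuousAt.2 fun z => (dW z).continuousAt
  have J := jorgens F G _ _ _ hF hG
    (continuous_iff_continuousAt.2 fun z => (dr z).continuousAt)
    (continuous_iff_continuousAt.2 fun z => (ds z).continuousAt)
    (continuous_iff_continuousAt.2 fun z => (dt z).continuousAt)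
    (fun z => by
      have := Wpos z
      have := Wsq z
      field_simp
      rw [this]; ring)
    (fun z => div_pos (by positivity) (Wpos z)) (fun z => div_pos (by positivity) (Wpos z))
  have cst : ∀ z w, p z ^ 2 = p w ^ 2 ∧ q z ^ 2 = q w ^ 2 := by
    intro z w
    obtain ⟨j1, -, j3⟩ := J z w
    have hz := Wpos z
    have hw := Wpos w
    have hz1 : 1 ≤ W z := by nlinarith [Wsq z, sq_nonneg (p z), sq_nonneg (q z)]
    have hw1 : 1 ≤ W w := by nlinarith [Wsq w, sq_nonneg (p w), sq_nonneg (q w)]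
    have e : W z = W w := by
      have e1 : (W z ^ 2 + 1) / W z = (W w ^ 2 + 1) / W w := by
        rw [Wsq, Wsq]
        linear_combination j1 + j3
      field_simp at e1
      have e2 : (W z - W w) * (W z * W w - 1) = 0 := by linear_combination e1
      rcases mul_eq_zero.1 e2 with h | h
      · linarith
      · nlinarith
    rw [e] at j1 j3
    field_simp at j1 j3
    constructor <;> linarith
  have cp := const_of_sq p hp1.continuous fun z w => (cst z w).1
  have cq := const_of_sq q hq1.continuous fun z w => (cst z w).2
  refine ⟨p 0, q 0, u 0, fun x y => ?_⟩
  have hfin : ∀ z, HasFDerivAt (fun z => u z - lin (p 0) (q 0) z) (0 : ℝ × ℝ →L[ℝ] ℝ) z := by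
    intro z
    have h1 := (hu.differentiable (by norm_num) z).hasFDerivAt
    rw [lin_eq (fderiv ℝ u z)] at h1
    change HasFDerivAt u (lin (p z) (q z)) z at h1
    rw [cp z 0, cq z 0] at h1
    have h2 := h1.sub (lin (p 0) (q 0)).hasFDerivAt
    rw [sub_self] at h2
    exact h2
  have := is_const_of_fderiv_eq_zero (𝕜 := ℝ) (fun z => (hfin z).differentiableAt)
    (fun z => (hfin z).fderiv) (x, y) 0
  simp [lin_apply] at this
  linarith
end

section
/- Let V : ℝ² → ℝ be a bounded continuous function which is 2π-periodic in its first variable, i.e. V(θ + 2π, t) = V(θ, t) for all (θ, t) ∈ ℝ². Then the real vector space of all bounded C² functions v : ℝ² → ℝ that are 2π-periodic in the first variable and satisfy Δv + V·v = 0 on ℝ² (where Δ = ∂²/∂θ² + ∂²/∂t² is the flat Laplacian) is finite dimensional. -/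
/-- Flat Laplacian `∂²/∂θ² + ∂²/∂t²` on `ℝ²`. -/
noncomputable def lap2 (f : ℝ × ℝ → ℝ) (p : ℝ × ℝ) : ℝ :=
  fderiv ℝ (fun q => fderiv ℝ f q (1, 0)) p (1, 0)
    + fderiv ℝ (fun q => fderiv ℝ f q (0, 1)) p (0, 1)

section
open Set Filter Topology

lemma ad_max_second {g g1 : ℝ → ℝ} {a t0 : ℝ} (h1 : ∀ t, HasDerivAt g (g1 t) t)
    (h2 : HasDerivAt g1 a t0) (hm : ∀ t, g t ≤ g t0) : a ≤ 0 := by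
  by_contra! hpos
  have hd : deriv g = g1 := funext fun t => (h1 t).deriv
  have hlm : IsLocalMax g t0 := Filter.Eventually.of_forall hm
  have hmin : IsLocalMin g t0 := by
    apply isLocalMin_of_deriv_deriv_pos
    · rw [hd, h2.deriv]; exact hpos
    · exact hlm.deriv_eq_zero
    · exact (h1 t0).continuousAt
  have hc : g =ᶠ[𝓝 t0] fun _ => g t0 := by
    filter_upwards [hmin] with t ht
    exact le_antisymm (hm t) ht
  have h3 : g1 =ᶠ[𝓝 t0] fun _ => 0 := by
    have := hc.deriv
    rw [hd] at this
    filter_upwards [this] with t ht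
    simpa using ht
  have h4 := h3.deriv_eq
  rw [h2.deriv] at h4
  simp at h4
  linarith

lemma ad_cosh_deriv (B m t : ℝ) :
    HasDerivAt (fun t => B * Real.cosh (m * t)) (B * m * Real.sinh (m * t)) t := by
  have := ((Real.hasDerivAt_cosh (m * t)).comp t ((hasDerivAt_id t).const_mul m)).const_mul B
  refine HasDerivAt.congr_deriv this ?_
  simp; try ring

lemma ad_sinh_deriv (B m t : ℝ) :
    HasDerivAt (fun t => B * m * Real.sinh (m * t)) (B * m ^ 2 * Real.cosh (m * t)) t := by
  have := ((Real.hasDerivAt_sinh (m * t)).comp t ((hasDerivAt_id t).const_mul m)).const_mul (B * m)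
  refine HasDerivAt.congr_deriv this ?_
  simp; try ring

lemma ad_high {y y1 f : ℝ → ℝ} {K m A D : ℝ} (hm : 0 < m) (hA : 0 < A) (hK : m ^ 2 < K)
    (h1 : ∀ t, HasDerivAt y (y1 t) t) (h2 : ∀ t, HasDerivAt y1 (K * y t - f t) t)
    (hf : ∀ t, |f t| ≤ A * Real.cosh (m * t)) (hb : ∀ t, |y t| ≤ D) (t : ℝ) :
    y t ≤ A / (K - m ^ 2) * Real.cosh (m * t) := by
  set B := A / (K - m ^ 2) with hB
  have hKm : 0 < K - m ^ 2 := by linarith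
  have hBpos : 0 < B := div_pos hA hKm
  have hBA : B * (K - m ^ 2) = A := by rw [hB]; field_simp
  set g : ℝ → ℝ := fun t => y t - B * Real.cosh (m * t) with hg
  have hg1 : ∀ t, HasDerivAt g (y1 t - B * m * Real.sinh (m * t)) t :=
    fun t => (h1 t).sub (ad_cosh_deriv B m t)
  have hgc : Continuous g := continuous_iff_continuousAt.2 fun t => (hg1 t).continuousAt
  have hlim : Tendsto g (cocompact ℝ) atBot := by
    have hab : Tendsto (fun t : ℝ => D - B * (m * |t|)) (cocompact ℝ) atBot := by
      have h0 : Tendsto (fun t : ℝ => |t|) (cocompact ℝ) atTop := tendsto_norm_cocompact_atTop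
      have h5 : Tendsto (fun t : ℝ => (B * m) * |t|) (cocompact ℝ) atTop :=
        h0.const_mul_atTop (by positivity)
      have h6 := tendsto_atBot_add_const_left (cocompact ℝ) D (tendsto_neg_atTop_atBot.comp h5)
      refine h6.congr fun t => ?_
      simp; ring
    refine tendsto_atBot_mono (fun t => ?_) hab
    have h7 : m * |t| ≤ Real.cosh (m * t) := by
      have h8 : |m * t| ≤ Real.cosh (m * t) := by
        rw [← Real.cosh_abs]
        have h9 : |m * t| ≤ Real.sinh |m * t| := Real.self_le_sinh_iff.2 (abs_nonneg _)
        linarith [Real.sinh_lt_cosh |m * t|]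
      rwa [abs_mul, abs_of_pos hm] at h8
    have := mul_le_mul_of_nonneg_left h7 hBpos.le
    have := (le_abs_self _).trans (hb t)
    simp only [hg]; linarith
  obtain ⟨t0, ht0⟩ := hgc.exists_forall_ge hlim
  have key := ad_max_second hg1 ((h2 t0).sub (ad_sinh_deriv B m t0)) ht0
  have hf0 := (le_abs_self _).trans (hf t0)
  have : g t0 ≤ 0 := by
    have : K * g t0 ≤ 0 := by
      simp only [hg]
      rw [← hBA] at hf0
      nlinarith
    have hKp : 0 < K := by nlinarith
    by_contra! h
    nlinarith [mul_pos hKp h]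
  have := ht0 t
  simp only [hg] at *
  linarith

lemma ad_compar {z z1 z2 : ℝ → ℝ} {k : ℝ} (hk : 0 ≤ k)
    (h1 : ∀ t, HasDerivAt z (z1 t) t) (h2 : ∀ t, HasDerivAt z1 (z2 t) t)
    (hz : ∀ t, k ^ 2 * z t ≤ z2 t) (h0 : 0 ≤ z 0) (h10 : 0 ≤ z1 0) (t : ℝ) (ht : 0 ≤ t) :
    0 ≤ z t := by
  have he : ∀ c t : ℝ, HasDerivAt (fun t => Real.exp (c * t)) (c * Real.exp (c * t)) t := by
    intro c t
    have := ((hasDerivAt_id t).const_mul c).exp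
    refine HasDerivAt.congr_deriv this ?_
    simp; try ring
  have hp : ∀ t, HasDerivAt (fun t => Real.exp (-k * t) * (z1 t + k * z t))
      (Real.exp (-k * t) * (z2 t - k ^ 2 * z t)) t := by
    intro t
    have := (he (-k) t).mul ((h2 t).add ((h1 t).const_mul k))
    refine HasDerivAt.congr_deriv this ?_
    simp only [Pi.add_apply]; ring
  have hpm : Monotone (fun t => Real.exp (-k * t) * (z1 t + k * z t)) := by
    apply monotone_of_deriv_nonneg (fun t => (hp t).differentiableAt)
    intro t
    rw [(hp t).deriv]
    exact mul_nonneg (Real.exp_pos _).le (by linarith [hz t])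
  have hp0 : ∀ t, 0 ≤ t → 0 ≤ z1 t + k * z t := by
    intro t ht
    have := hpm ht
    simp only [mul_zero, Real.exp_zero, one_mul] at this
    have h3 : 0 ≤ Real.exp (-k * t) * (z1 t + k * z t) := by
      have : 0 ≤ k * z 0 := mul_nonneg hk h0
      linarith
    exact nonneg_of_mul_nonneg_right h3 (Real.exp_pos _)
  have hq : ∀ t, HasDerivAt (fun t => Real.exp (k * t) * z t)
      (Real.exp (k * t) * (z1 t + k * z t)) t := by
    intro t
    have := (he k t).mul (h1 t)
    refine HasDerivAt.congr_deriv this ?_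
    ring
  have hqm : MonotoneOn (fun t => Real.exp (k * t) * z t) (Ici 0) := by
    apply monotoneOn_of_deriv_nonneg (convex_Ici 0)
    · exact fun t _ => (hq t).continuousAt.continuousWithinAt
    · exact fun t _ => (hq t).differentiableAt.differentiableWithinAt
    · intro t ht
      rw [interior_Ici] at ht
      rw [(hq t).deriv]
      exact mul_nonneg (Real.exp_pos _).le (hp0 t (le_of_lt ht))
  have := hqm (self_mem_Ici) (show t ∈ Ici (0:ℝ) from ht) ht
  simp only [mul_zero, Real.exp_zero, one_mul] at this
  exact nonneg_of_mul_nonneg_right (h0.trans this) (Real.exp_pos _)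

lemma ad_low_pos {y y1 f : ℝ → ℝ} {k m A : ℝ} (hk : 0 ≤ k) (hA : 0 < A) (hK : k ^ 2 < m ^ 2)
    (h1 : ∀ t, HasDerivAt y (y1 t) t) (h2 : ∀ t, HasDerivAt y1 (k ^ 2 * y t - f t) t)
    (hf : ∀ t, |f t| ≤ A * Real.cosh (m * t)) (h0 : y 0 = 0) (h10 : y1 0 = 0) (t : ℝ)
    (ht : 0 ≤ t) :
    y t ≤ A / (m ^ 2 - k ^ 2) * Real.cosh (m * t) := by
  set B := A / (m ^ 2 - k ^ 2) with hB
  have hKm : 0 < m ^ 2 - k ^ 2 := by linarith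
  have hBpos : 0 < B := div_pos hA hKm
  have hBA : B * (m ^ 2 - k ^ 2) = A := by rw [hB]; field_simp
  have := ad_compar hk (fun t => (ad_cosh_deriv B m t).sub (h1 t))
    (fun t => (ad_sinh_deriv B m t).sub (h2 t)) (fun t => ?_) (by simp [h0, hBpos.le])
    (by simp [h10]) t ht
  · simpa using this
  · have := (neg_abs_le _).trans' (neg_le_neg (hf t))
    rw [← hBA] at this
    simp only [Pi.sub_apply]
    nlinarith

lemma ad_low {y y1 f : ℝ → ℝ} {k m A : ℝ} (hk : 0 ≤ k) (hA : 0 < A) (hK : k ^ 2 < m ^ 2)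
    (h1 : ∀ t, HasDerivAt y (y1 t) t) (h2 : ∀ t, HasDerivAt y1 (k ^ 2 * y t - f t) t)
    (hf : ∀ t, |f t| ≤ A * Real.cosh (m * t)) (h0 : y 0 = 0) (h10 : y1 0 = 0) (t : ℝ) :
    y t ≤ A / (m ^ 2 - k ^ 2) * Real.cosh (m * t) := by
  rcases le_total 0 t with ht | ht
  · exact ad_low_pos hk hA hK h1 h2 hf h0 h10 t ht
  · have hn : ∀ t : ℝ, HasDerivAt (fun t : ℝ => -t) (-1) t := fun t => (hasDerivAt_id t).neg
    have := ad_low_pos (y := fun t => y (-t)) (y1 := fun t => - y1 (-t)) (f := fun t => f (-t))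
      hk hA hK (fun t => ?_) (fun t => ?_) (fun t => ?_) (by simp [h0]) (by simp [h10]) (-t)
      (by linarith)
    · simpa using this
    · refine HasDerivAt.congr_deriv ((h1 (-t)).comp t (hn t)) ?_
      simp
    · refine HasDerivAt.congr_deriv (((h2 (-t)).comp t (hn t)).neg) ?_
      simp
    · simpa using hf (-t)

lemma ad_bound {y y1 f : ℝ → ℝ} {k m A D : ℝ} (hk : 0 ≤ k) (hm : 0 < m) (hA : 0 < A)
    (hne : k ≠ m)
    (h1 : ∀ t, HasDerivAt y (y1 t) t) (h2 : ∀ t, HasDerivAt y1 (k ^ 2 * y t - f t) t)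
    (hf : ∀ t, |f t| ≤ A * Real.cosh (m * t)) (hb : ∀ t, |y t| ≤ D)
    (h0 : k < m → y 0 = 0 ∧ y1 0 = 0) (t : ℝ) :
    |y t| ≤ A * (1 / |k ^ 2 - m ^ 2|) * Real.cosh (m * t) := by
  have h1n : ∀ t, HasDerivAt (fun t => - y t) (- y1 t) t := fun t => (h1 t).neg
  have h2n : ∀ t, HasDerivAt (fun t => - y1 t) (k ^ 2 * (- y t) - (- f t)) t := by
    intro t
    refine HasDerivAt.congr_deriv ((h2 t).neg) ?_
    ring
  have hfn : ∀ t, |- f t| ≤ A * Real.cosh (m * t) := by simpa using hf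
  rw [mul_one_div]
  rcases lt_or_gt_of_ne hne with h | h
  · have hK : k ^ 2 < m ^ 2 := by nlinarith
    obtain ⟨h00, h10⟩ := h0 h
    rw [abs_sub_comm, abs_of_pos (sub_pos.2 hK)]
    refine abs_le'.2 ⟨ad_low hk hA hK h1 h2 hf h00 h10 t,
      ad_low hk hA hK h1n h2n hfn (by simp [h00]) (by simp [h10]) t⟩
  · have hK : m ^ 2 < k ^ 2 := by nlinarith
    rw [abs_of_pos (sub_pos.2 hK)]
    exact abs_le'.2 ⟨ad_high hm hA hK h1 h2 hf hb t,
      ad_high hm hA hK h1n h2n hfn (D := D) (by simpa using hb) t⟩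

lemma ad_series (ε : ℝ) (hε : 0 < ε) : ∃ j : ℕ,
    Summable (fun k : ℤ => 1 / |(|(k : ℝ)|) ^ 2 - ((j : ℝ) + 1 / 2) ^ 2|) ∧
    ∑' k : ℤ, 1 / |(|(k : ℝ)|) ^ 2 - ((j : ℝ) + 1 / 2) ^ 2| ≤ ε := by
  set g : ℤ → ℝ := fun n => 1 / |(n : ℝ) + (-1 / 2)| ^ (3 / 2 : ℝ) with hg
  have hgs : Summable g := (Real.summable_one_div_int_add_rpow (-1 / 2) (3 / 2)).2 (by norm_num)
  have hg0 : ∀ n, 0 ≤ g n := fun n => by positivity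
  set G := ∑' n, g n with hG
  have hG0 : 0 ≤ G := tsum_nonneg hg0
  obtain ⟨j, hj⟩ := exists_nat_gt ((2 * G / ε) ^ 2)
  refine ⟨j, ?_⟩
  set μ : ℝ := (j : ℝ) + 1 / 2 with hμ
  have hμ0 : 0 < μ := by positivity
  have hb : ∀ k : ℤ, 1 / |(|(k : ℝ)|) ^ 2 - μ ^ 2| ≤ (1 / √μ) * (g (k - j) + g (-k - j)) := by
    intro k
    have hle : g (|k| - j) ≤ g (k - j) + g (-k - j) := by
      rcases abs_choice k with h | h <;> rw [h]
      · linarith [hg0 (-k - j)]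
      · linarith [hg0 (k - j)]
    refine le_trans ?_ (mul_le_mul_of_nonneg_left hle (by positivity))
    simp only [hg]
    have hx : ((|k| - (j : ℤ) : ℤ) : ℝ) + (-1 / 2) = |(k : ℝ)| - μ := by
      push_cast; rw [hμ]; ring
    rw [hx]
    set x := |(k : ℝ)| - μ with hxd
    have hx0 : x ≠ 0 := by
      rw [← hx]
      intro h
      have h2 : (((|k| - (j : ℤ)) * 2 : ℤ) : ℝ) = ((1 : ℤ) : ℝ) := by push_cast at h ⊢; linarith
      have := Int.cast_injective h2
      omega
    have hxp : 0 < |x| := abs_pos.2 hx0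
    have hs : |(|(k : ℝ)|) ^ 2 - μ ^ 2| = (|(k : ℝ)| + μ) * |x| := by
      rw [sq_sub_sq, abs_mul, abs_of_pos (by positivity : 0 < |(k : ℝ)| + μ)]
    have h3 : |x| ^ (3 / 2 : ℝ) = √|x| * |x| := by
      rw [show (3 / 2 : ℝ) = 1 / 2 + 1 by norm_num, Real.rpow_add hxp, Real.rpow_one,
        Real.sqrt_eq_rpow]
    rw [hs, h3, one_div_mul_one_div]
    apply one_div_le_one_div_of_le (by positivity)
    rw [← mul_assoc]
    apply mul_le_mul_of_nonneg_right _ hxp.le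
    have hxs : |x| ≤ |(k : ℝ)| + μ := by
      rw [abs_le]; constructor <;> [skip; skip] <;> linarith [abs_nonneg (k : ℝ)]
    have hms : μ ≤ |(k : ℝ)| + μ := by linarith [abs_nonneg (k : ℝ)]
    calc √μ * √|x| ≤ √(|(k : ℝ)| + μ) * √(|(k : ℝ)| + μ) := by gcongr
      _ = _ := Real.mul_self_sqrt (by positivity)
  have e1 : Summable (fun k : ℤ => g (k - j)) := ((Equiv.subRight (j : ℤ)).summable_iff (f := g)).2 hgs
  have e2 : Summable (fun k : ℤ => g (-k - j)) :=
    (((Equiv.neg ℤ).trans (Equiv.subRight (j : ℤ))).summable_iff (f := g)).2 hgs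
  have t1 : ∑' k : ℤ, g (k - j) = G := (Equiv.subRight (j : ℤ)).tsum_eq g
  have t2 : ∑' k : ℤ, g (-k - j) = G := ((Equiv.neg ℤ).trans (Equiv.subRight (j : ℤ))).tsum_eq g
  have hS : Summable (fun k : ℤ => (1 / √μ) * (g (k - j) + g (-k - j))) := (e1.add e2).mul_left _
  have hsum := Summable.of_nonneg_of_le (fun k => by positivity) hb hS
  refine ⟨hsum, (hsum.tsum_le_tsum hb hS).trans ?_⟩
  rw [tsum_mul_left, e1.tsum_add e2, t1, t2]
  have : 2 * G / ε ≤ √μ := Real.le_sqrt_of_sq_le (by rw [hμ]; linarith)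
  rw [div_le_iff₀ hε] at this
  rw [one_div_mul_eq_div, div_le_iff₀ (by positivity)]
  linarith

lemma ad_diffInt {G Gt : ℝ × ℝ → ℝ} (hG : Continuous G) (hGt : Continuous Gt)
    (h : ∀ θ t, HasDerivAt (fun t => G (θ, t)) (Gt (θ, t)) t) (t0 : ℝ) :
    HasDerivAt (fun t => ∫ θ in (0:ℝ)..(2 * Real.pi), G (θ, t))
      (∫ θ in (0:ℝ)..(2 * Real.pi), Gt (θ, t0)) t0 := by
  obtain ⟨C, hC⟩ := ((isCompact_uIcc (a := (0:ℝ)) (b := 2 * Real.pi)).prod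
    (isCompact_Icc (a := t0 - 1) (b := t0 + 1))).exists_bound_of_continuousOn hGt.continuousOn
  refine (intervalIntegral.hasDerivAt_integral_of_dominated_loc_of_deriv_le
    (F := fun t θ => G (θ, t)) (F' := fun t θ => Gt (θ, t)) (bound := fun _ => C)
    (s := Icc (t0 - 1) (t0 + 1)) (Icc_mem_nhds (by linarith) (by linarith)) ?_ ?_ ?_ ?_ ?_ ?_).2
  · exact Eventually.of_forall fun t =>
      (hG.comp (Continuous.prodMk_left t)).aestronglyMeasurable
  · exact (hG.comp (Continuous.prodMk_left t0)).intervalIntegrable _ _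
  · exact (hGt.comp (Continuous.prodMk_left t0)).aestronglyMeasurable
  · exact Eventually.of_forall fun θ hθ t ht => hC (θ, t) ⟨uIoc_subset_uIcc hθ, ht⟩
  · exact intervalIntegrable_const
  · exact Eventually.of_forall fun θ hθ t ht => h θ t

lemma ad_part2 {f : ℝ × ℝ → ℝ} (hf : Differentiable ℝ f) (θ t : ℝ) :
    HasDerivAt (fun t => f (θ, t)) (fderiv ℝ f (θ, t) (0, 1)) t :=
  (hf (θ, t)).hasFDerivAt.comp_hasDerivAt t ((hasDerivAt_const t θ).prodMk (hasDerivAt_id t))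

lemma ad_part1 {f : ℝ × ℝ → ℝ} (hf : Differentiable ℝ f) (θ t : ℝ) :
    HasDerivAt (fun θ => f (θ, t)) (fderiv ℝ f (θ, t) (1, 0)) θ :=
  (hf (θ, t)).hasFDerivAt.comp_hasDerivAt θ ((hasDerivAt_id θ).prodMk (hasDerivAt_const θ t))

lemma ad_ode {V v : ℝ × ℝ → ℝ} {φ φ1 : ℝ → ℝ} {k : ℝ} (hV : Continuous V) (hv : ContDiff ℝ 2 v)
    (hper : ∀ θ t : ℝ, v (θ + 2 * Real.pi, t) = v (θ, t))
    (heq : ∀ p, lap2 v p + V p * v p = 0)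
    (hφ : ∀ θ, HasDerivAt φ (φ1 θ) θ) (hφ1 : ∀ θ, HasDerivAt φ1 (- k ^ 2 * φ θ) θ)
    (hp : φ (2 * Real.pi) = φ 0) (hp1 : φ1 (2 * Real.pi) = φ1 0) (t : ℝ) :
    HasDerivAt (fun t => ∫ θ in (0:ℝ)..(2 * Real.pi), φ θ * v (θ, t))
      (∫ θ in (0:ℝ)..(2 * Real.pi), φ θ * fderiv ℝ v (θ, t) (0, 1)) t ∧
    HasDerivAt (fun t => ∫ θ in (0:ℝ)..(2 * Real.pi), φ θ * fderiv ℝ v (θ, t) (0, 1))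
      (k ^ 2 * (∫ θ in (0:ℝ)..(2 * Real.pi), φ θ * v (θ, t)) -
        ∫ θ in (0:ℝ)..(2 * Real.pi), φ θ * (V (θ, t) * v (θ, t))) t := by
  have hφc : Continuous φ := continuous_iff_continuousAt.2 fun t => (hφ t).continuousAt
  have hφ1c : Continuous φ1 := continuous_iff_continuousAt.2 fun t => (hφ1 t).continuousAt
  have hvd : Differentiable ℝ v := hv.differentiable (by norm_num)
  have hvc : Continuous v := hv.continuous
  have hfd : ContDiff ℝ 1 (fderiv ℝ v) := hv.fderiv_right (by norm_num)
  have hdir : ∀ e : ℝ × ℝ, ContDiff ℝ 1 (fun q => fderiv ℝ v q e) := fun e =>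
    hfd.clm_apply contDiff_const
  have hdird : ∀ e : ℝ × ℝ, Differentiable ℝ (fun q => fderiv ℝ v q e) := fun e =>
    (hdir e).differentiable (by norm_num)
  have hdirc : ∀ e : ℝ × ℝ, Continuous (fun q => fderiv ℝ v q e) := fun e => (hdir e).continuous
  have hdir2 : ∀ e e' : ℝ × ℝ, Continuous (fun p => fderiv ℝ (fun q => fderiv ℝ v q e) p e') :=
    fun e e' => ((hdir e).continuous_fderiv (by norm_num)).clm_apply continuous_const
  have c1 : Continuous fun p : ℝ × ℝ => φ p.1 := hφc.comp continuous_fst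
  have sl : ∀ {f : ℝ × ℝ → ℝ}, Continuous f → Continuous fun θ : ℝ => f (θ, t) :=
    fun hf => hf.comp (Continuous.prodMk_left t)
  refine ⟨ad_diffInt (G := fun p => φ p.1 * v p) (Gt := fun p => φ p.1 * fderiv ℝ v p (0, 1))
    (c1.mul hvc) (c1.mul (hdirc _)) (fun θ t => (ad_part2 hvd θ t).const_mul (φ θ)) t, ?_⟩
  have hd := ad_diffInt (G := fun p => φ p.1 * fderiv ℝ v p (0, 1))
    (Gt := fun p => φ p.1 * fderiv ℝ (fun q => fderiv ℝ v q (0, 1)) p (0, 1))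
    (c1.mul (hdirc _)) (c1.mul (hdir2 _ _)) (fun θ t => (ad_part2 (hdird _) θ t).const_mul (φ θ)) t
  refine hd.congr_deriv ?_
  -- Green identity
  have hper1 : fderiv ℝ v (2 * Real.pi, t) (1, 0) = fderiv ℝ v (0, t) (1, 0) := by
    have h1 := ad_part1 hvd 0 t
    have h2 : HasDerivAt (fun θ => v (θ + 2 * Real.pi, t)) (fderiv ℝ v (2 * Real.pi, t) (1, 0)) 0 :=
      HasDerivAt.comp_add_const 0 (2 * Real.pi) (f := fun θ => v (θ, t))
        (by simpa using ad_part1 hvd (2 * Real.pi) t)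
    simp only [hper] at h2
    exact h2.unique h1
  have hgreen : ∀ θ, HasDerivAt (fun θ => φ θ * fderiv ℝ v (θ, t) (1, 0) - φ1 θ * v (θ, t))
      (φ θ * fderiv ℝ (fun q => fderiv ℝ v q (1, 0)) (θ, t) (1, 0) + k ^ 2 * (φ θ * v (θ, t))) θ := by
    intro θ
    refine HasDerivAt.congr_deriv (((hφ θ).mul (ad_part1 (hdird (1, 0)) θ t)).sub
      ((hφ1 θ).mul (ad_part1 hvd θ t))) ?_
    ring
  have hA : Continuous fun θ => φ θ * fderiv ℝ (fun q => fderiv ℝ v q (1, 0)) (θ, t) (1, 0) :=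
    hφc.mul (sl (hdir2 _ _))
  have hB : Continuous fun θ => φ θ * v (θ, t) := hφc.mul (sl hvc)
  have hC : Continuous fun θ => φ θ * (V (θ, t) * v (θ, t)) := hφc.mul ((sl hV).mul (sl hvc))
  have hI := intervalIntegral.integral_eq_sub_of_hasDerivAt (a := 0) (b := 2 * Real.pi)
    (fun θ _ => hgreen θ) ((hA.add (hB.const_mul _)).intervalIntegrable _ _)
  have hv0 : v (2 * Real.pi, t) = v (0, t) := by simpa using hper 0 t
  rw [hp, hp1, hper1, hv0, sub_self, intervalIntegral.integral_add (hA.intervalIntegrable _ _)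
    ((hB.const_mul _).intervalIntegrable _ _), intervalIntegral.integral_const_mul] at hI
  have hfin : ∀ θ : ℝ, φ θ * fderiv ℝ (fun q => fderiv ℝ v q (0, 1)) (θ, t) (0, 1) =
      - (φ θ * fderiv ℝ (fun q => fderiv ℝ v q (1, 0)) (θ, t) (1, 0))
        - φ θ * (V (θ, t) * v (θ, t)) := by
    intro θ
    have := heq (θ, t)
    rw [lap2] at this
    linear_combination φ θ * this
  have hA' : Continuous fun θ =>
      -(φ θ * fderiv ℝ (fun q => fderiv ℝ v q (1, 0)) (θ, t) (1, 0)) := hA.neg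
  simp only [hfin]
  rw [intervalIntegral.integral_sub (hA'.intervalIntegrable _ _) (hC.intervalIntegrable _ _),
    intervalIntegral.integral_neg]
  linarith

lemma ad_int_bound {φ : ℝ → ℝ} {w : ℝ → ℝ} {A : ℝ} (hφ : ∀ θ, |φ θ| ≤ 1) (hw : ∀ θ, |w θ| ≤ A) :
    |∫ θ in (0:ℝ)..(2 * Real.pi), φ θ * w θ| ≤ 2 * Real.pi * A := by
  have := intervalIntegral.norm_integral_le_of_norm_le_const (a := (0:ℝ)) (b := 2 * Real.pi)
    (f := fun θ => φ θ * w θ) (C := A) (fun θ _ => by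
      rw [Real.norm_eq_abs, abs_mul]
      calc |φ θ| * |w θ| ≤ 1 * A := mul_le_mul (hφ θ) (hw θ) (abs_nonneg _) zero_le_one
        _ = A := one_mul A)
  rw [Real.norm_eq_abs, sub_zero, abs_of_pos Real.two_pi_pos] at this
  linarith

lemma ad_fourier {w : ℝ → ℝ} (hw : Continuous w) (hper : ∀ θ, w (θ + 2 * Real.pi) = w θ)
    {b : ℤ → ℝ} (hb : Summable b)
    (hc : ∀ k : ℤ, |∫ θ in (0:ℝ)..(2 * Real.pi), Real.cos (|(k : ℝ)| * θ) * w θ| ≤ 2 * Real.pi * b k)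
    (hs : ∀ k : ℤ, |∫ θ in (0:ℝ)..(2 * Real.pi), Real.sin (|(k : ℝ)| * θ) * w θ| ≤ 2 * Real.pi * b k)
    (θ : ℝ) : |w θ| ≤ 2 * ∑' k, b k := by
  have : Fact (0 < 2 * Real.pi) := ⟨Real.two_pi_pos⟩
  have hp : Function.Periodic (fun θ => (w θ : ℂ)) (2 * Real.pi) := fun θ => by simp [hper]
  let F : C(AddCircle (2 * Real.pi), ℂ) := ⟨hp.lift, continuous_coinduced_dom.mpr
    (Complex.continuous_ofReal.comp hw)⟩
  have hF : ∀ x : ℝ, F (x : AddCircle (2 * Real.pi)) = (w x : ℂ) := fun x => rfl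
  have hcoef : ∀ k : ℤ, ‖fourierCoeff F k‖ ≤ 2 * b k := by
    intro k
    have hint : fourierCoeff F k = ((1 / (2 * Real.pi) *
          ∫ θ in (0:ℝ)..(2 * Real.pi), Real.cos (k * θ) * w θ : ℝ) : ℂ)
        - ((1 / (2 * Real.pi) *
          ∫ θ in (0:ℝ)..(2 * Real.pi), Real.sin (k * θ) * w θ : ℝ) : ℂ) * Complex.I := by
      rw [fourierCoeff_eq_intervalIntegral _ _ 0, zero_add]
      have : ∀ x : ℝ, (fourier (-k) (x : AddCircle (2 * Real.pi)) : ℂ) • F (x : AddCircle (2 * Real.pi))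
          = ((Real.cos (k * x) * w x : ℝ) : ℂ) - ((Real.sin (k * x) * w x : ℝ) : ℂ) * Complex.I := by
        intro x
        rw [hF, fourier_coe_apply]
        have h1 : 2 * (Real.pi : ℂ) * Complex.I * ((-k : ℤ) : ℂ) * x / ((2 * Real.pi : ℝ) : ℂ)
            = ((-(k * x) : ℝ) : ℂ) * Complex.I := by
          have : (Real.pi : ℂ) ≠ 0 := by exact_mod_cast Real.pi_ne_zero
          push_cast
          field_simp
        rw [h1, Complex.exp_mul_I, ← Complex.ofReal_cos, ← Complex.ofReal_sin, Real.cos_neg,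
          Real.sin_neg]
        push_cast
        simp only [smul_eq_mul]
        ring
      simp only [this]
      rw [intervalIntegral.integral_sub, intervalIntegral.integral_mul_const,
        intervalIntegral.integral_ofReal, intervalIntegral.integral_ofReal, Complex.real_smul]
      · push_cast; ring
      · exact Continuous.intervalIntegrable (by fun_prop) _ _
      · exact Continuous.intervalIntegrable (by fun_prop) _ _
    have hc' : |∫ θ in (0:ℝ)..(2 * Real.pi), Real.cos (k * θ) * w θ| ≤ 2 * Real.pi * b k := by
      rcases abs_choice (k : ℝ) with h | h
      · simpa only [h] using hc k
      · have := hc k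
        simpa only [h, neg_mul, Real.cos_neg] using this
    have hs' : |∫ θ in (0:ℝ)..(2 * Real.pi), Real.sin (k * θ) * w θ| ≤ 2 * Real.pi * b k := by
      rcases abs_choice (k : ℝ) with h | h
      · simpa only [h] using hs k
      · have := hs k
        simpa only [h, neg_mul, Real.sin_neg, intervalIntegral.integral_neg, abs_neg] using this
    have hred : ∀ z : ℝ, |z| ≤ 2 * Real.pi * b k → |1 / (2 * Real.pi) * z| ≤ b k := by
      intro z hz
      rw [abs_mul, abs_of_pos (by positivity : 0 < 1 / (2 * Real.pi)), one_div_mul_eq_div,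
        div_le_iff₀ Real.two_pi_pos]
      linarith
    rw [hint]
    refine (norm_sub_le _ _).trans ?_
    rw [norm_mul, Complex.norm_I, mul_one, Complex.norm_real, Complex.norm_real]
    have := hred _ hc'
    have := hred _ hs'
    simp only [Real.norm_eq_abs]
    linarith
  have hb2 : Summable fun k => 2 * b k := hb.mul_left 2
  have hsum : Summable (fourierCoeff F) := Summable.of_norm_bounded hb2 hcoef
  have hh := has_pointwise_sum_fourier_series_of_summable hsum (θ : AddCircle (2 * Real.pi))
  have h3 : ‖F (θ : AddCircle (2 * Real.pi))‖ ≤ ∑' k, 2 * b k := by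
    rw [← hh.tsum_eq]
    refine tsum_of_norm_bounded hb2.hasSum fun k => ?_
    rw [norm_smul]
    have : ‖(fourier k (θ : AddCircle (2 * Real.pi)) : ℂ)‖ = 1 := Circle.norm_coe _
    rw [this, mul_one]
    exact hcoef k
  rw [hF, Complex.norm_real, tsum_mul_left] at h3
  exact h3

lemma ad_step {V v : ℝ × ℝ → ℝ} {C D A : ℝ} {j : ℕ} (hC : 0 < C) (hA : 0 < A)
    (hV : Continuous V) (hVb : ∀ p, |V p| ≤ C) (hv : ContDiff ℝ 2 v) (hD : ∀ p, |v p| ≤ D)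
    (hper : ∀ θ t : ℝ, v (θ + 2 * Real.pi, t) = v (θ, t))
    (heq : ∀ p, lap2 v p + V p * v p = 0)
    (hsm : Summable (fun k : ℤ => 1 / |(|(k : ℝ)|) ^ 2 - ((j : ℝ) + 1 / 2) ^ 2|))
    (hc0 : ∀ n : ℕ, n ≤ j → ∫ θ in (0:ℝ)..(2 * Real.pi), Real.cos (n * θ) * v (θ, 0) = 0)
    (hs0 : ∀ n : ℕ, n ≤ j → ∫ θ in (0:ℝ)..(2 * Real.pi), Real.sin (n * θ) * v (θ, 0) = 0)
    (hc1 : ∀ n : ℕ, n ≤ j →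
      ∫ θ in (0:ℝ)..(2 * Real.pi), Real.cos (n * θ) * fderiv ℝ v (θ, 0) (0, 1) = 0)
    (hs1 : ∀ n : ℕ, n ≤ j →
      ∫ θ in (0:ℝ)..(2 * Real.pi), Real.sin (n * θ) * fderiv ℝ v (θ, 0) (0, 1) = 0)
    (hvA : ∀ θ t : ℝ, |v (θ, t)| ≤ A * Real.cosh (((j : ℝ) + 1 / 2) * t)) (θ t : ℝ) :
    |v (θ, t)| ≤ (2 * C * ∑' k : ℤ, 1 / |(|(k : ℝ)|) ^ 2 - ((j : ℝ) + 1 / 2) ^ 2|) * A *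
      Real.cosh (((j : ℝ) + 1 / 2) * t) := by
  set m : ℝ := (j : ℝ) + 1 / 2 with hm
  have hm0 : 0 < m := by positivity
  have habs : ∀ k : ℤ, |(k : ℝ)| = (k.natAbs : ℝ) := fun k => by
    rw [Nat.cast_natAbs, Int.cast_abs]
  have hlow : ∀ k : ℤ, |(k : ℝ)| < m → k.natAbs ≤ j := by
    intro k hk
    rw [habs, hm] at hk
    have : (k.natAbs : ℝ) < ((j + 1 : ℕ) : ℝ) := by push_cast; linarith
    have := Nat.cast_lt.1 this
    omega
  have hne : ∀ k : ℤ, |(k : ℝ)| ≠ m := by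
    intro k hk
    rw [habs, hm] at hk
    have h2 : ((k.natAbs * 2 : ℕ) : ℝ) = ((2 * j + 1 : ℕ) : ℝ) := by push_cast; linarith
    have := Nat.cast_injective h2
    omega
  have hVv : ∀ θ t, |V (θ, t) * v (θ, t)| ≤ C * A * Real.cosh (m * t) := by
    intro θ t
    rw [abs_mul, mul_assoc]
    exact mul_le_mul (hVb _) (hvA θ t) (abs_nonneg _) hC.le
  have main : ∀ (k : ℤ) (φ φ1 : ℝ → ℝ), (∀ θ, HasDerivAt φ (φ1 θ) θ) →
      (∀ θ, HasDerivAt φ1 (- |(k : ℝ)| ^ 2 * φ θ) θ) → φ (2 * Real.pi) = φ 0 →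
      φ1 (2 * Real.pi) = φ1 0 → (∀ θ, |φ θ| ≤ 1) →
      (|(k : ℝ)| < m → (∫ θ in (0:ℝ)..(2 * Real.pi), φ θ * v (θ, 0)) = 0 ∧
        (∫ θ in (0:ℝ)..(2 * Real.pi), φ θ * fderiv ℝ v (θ, 0) (0, 1)) = 0) →
      |∫ θ in (0:ℝ)..(2 * Real.pi), φ θ * v (θ, t)| ≤
        2 * Real.pi * (C * A * Real.cosh (m * t) * (1 / |(|(k : ℝ)|) ^ 2 - m ^ 2|)) := by
    intro k φ φ1 h1 h2 hp hp1 hφ h0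
    have hode := ad_ode hV hv hper heq h1 h2 hp hp1
    have := ad_bound (A := 2 * Real.pi * (C * A)) (D := 2 * Real.pi * D) (abs_nonneg (k : ℝ)) hm0
      (by positivity) (hne k)
      (fun t => (hode t).1) (fun t => (hode t).2) (fun t => by
        rw [mul_assoc]
        exact ad_int_bound hφ (fun θ => hVv θ t)) (fun t => ad_int_bound hφ (fun θ => hD _))
      h0 t
    refine this.trans (le_of_eq ?_)
    ring
  have hcosd : ∀ c θ : ℝ, HasDerivAt (fun θ => Real.cos (c * θ)) (-(c * Real.sin (c * θ))) θ := by
    intro c θ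
    refine HasDerivAt.congr_deriv ((hasDerivAt_id θ).const_mul c).cos ?_
    simp; ring
  have hsind : ∀ c θ : ℝ, HasDerivAt (fun θ => Real.sin (c * θ)) (c * Real.cos (c * θ)) θ := by
    intro c θ
    refine HasDerivAt.congr_deriv ((hasDerivAt_id θ).const_mul c).sin ?_
    simp; ring
  have hcp : ∀ n : ℕ, Real.cos (n * (2 * Real.pi)) = 1 := fun n => Real.cos_nat_mul_two_pi n
  have hsp : ∀ n : ℕ, Real.sin (n * (2 * Real.pi)) = 0 := fun n => by
    have := Real.sin_nat_mul_pi (n * 2)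
    push_cast at this
    rwa [mul_assoc] at this
  have hfin := ad_fourier (w := fun θ => v (θ, t))
    (b := fun k => C * A * Real.cosh (m * t) * (1 / |(|(k : ℝ)|) ^ 2 - m ^ 2|))
    (hv.continuous.comp (Continuous.prodMk_left t)) (fun θ => hper θ t) (hsm.mul_left _)
    (fun k => main k (fun θ => Real.cos (|(k : ℝ)| * θ))
      (fun θ => -(|(k : ℝ)| * Real.sin (|(k : ℝ)| * θ))) (hcosd _)
      (fun θ => HasDerivAt.congr_deriv ((hsind _ θ).const_mul _).neg (by ring))
      (by simp only [habs k, hcp]; simp) (by simp only [habs k, hsp]; simp) (fun θ => Real.abs_cos_le_one _)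
      (fun hk => by
        rw [habs]
        exact ⟨hc0 _ (hlow k hk), hc1 _ (hlow k hk)⟩))
    (fun k => main k (fun θ => Real.sin (|(k : ℝ)| * θ))
      (fun θ => (|(k : ℝ)| * Real.cos (|(k : ℝ)| * θ))) (hsind _)
      (fun θ => HasDerivAt.congr_deriv ((hcosd _ θ).const_mul _) (by ring))
      (by simp only [habs k, hsp]; simp) (by simp only [habs k, hcp]; simp) (fun θ => Real.abs_sin_le_one _)
      (fun hk => by
        rw [habs]
        exact ⟨hs0 _ (hlow k hk), hs1 _ (hlow k hk)⟩)) θ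
  rw [tsum_mul_left] at hfin
  refine hfin.trans (le_of_eq ?_)
  ring

/-- Uniqueness: a bounded solution with vanishing low-frequency Cauchy data at `t = 0` is zero. -/
lemma ad_unique {V : ℝ × ℝ → ℝ} (hV : Continuous V) (hVbdd : ∃ C : ℝ, ∀ p, |V p| ≤ C) :
    ∃ j : ℕ, ∀ v : ℝ × ℝ → ℝ, (∃ C : ℝ, ∀ p, |v p| ≤ C) → ContDiff ℝ 2 v →
    (∀ θ t : ℝ, v (θ + 2 * Real.pi, t) = v (θ, t)) →
    (∀ p, lap2 v p + V p * v p = 0) →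
    (∀ n : ℕ, n ≤ j → ∫ θ in (0:ℝ)..(2 * Real.pi), Real.cos (n * θ) * v (θ, 0) = 0) →
    (∀ n : ℕ, n ≤ j → ∫ θ in (0:ℝ)..(2 * Real.pi), Real.sin (n * θ) * v (θ, 0) = 0) →
    (∀ n : ℕ, n ≤ j →
      ∫ θ in (0:ℝ)..(2 * Real.pi), Real.cos (n * θ) * fderiv ℝ v (θ, 0) (0, 1) = 0) →
    (∀ n : ℕ, n ≤ j →
      ∫ θ in (0:ℝ)..(2 * Real.pi), Real.sin (n * θ) * fderiv ℝ v (θ, 0) (0, 1) = 0) →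
    v = 0 := by
  obtain ⟨C₀, hC₀⟩ := hVbdd
  set C := |C₀| + 1 with hCdef
  have hC : 0 < C := by positivity
  have hVb : ∀ p, |V p| ≤ C := fun p => by linarith [hC₀ p, le_abs_self C₀]
  obtain ⟨j, hsm, hle⟩ := ad_series (1 / (4 * C)) (by positivity)
  refine ⟨j, ?_⟩
  rintro v ⟨D, hD⟩ hv hper heq hc0 hs0 hc1 hs1
  set A := |D| + 1 with hAdef
  have hA : 0 < A := by positivity
  have hiter : ∀ n : ℕ, ∀ θ t : ℝ,
      |v (θ, t)| ≤ (A * (1 / 2) ^ n) * Real.cosh (((j : ℝ) + 1 / 2) * t) := by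
    intro n
    induction n with
    | zero =>
      intro θ t
      have h1 := Real.one_le_cosh (((j : ℝ) + 1 / 2) * t)
      have h2 : |v (θ, t)| ≤ A := by linarith [hD (θ, t), le_abs_self D]
      rw [pow_zero, mul_one]
      nlinarith
    | succ n ih =>
      intro θ t
      refine (ad_step hC (by positivity) hV hVb hv hD hper heq hsm hc0 hs0 hc1 hs1 ih θ t).trans ?_
      apply mul_le_mul_of_nonneg_right _ (Real.cosh_pos _).le
      have : 2 * C * ∑' k : ℤ, 1 / |(|(k : ℝ)|) ^ 2 - ((j : ℝ) + 1 / 2) ^ 2| ≤ 1 / 2 := by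
        refine (mul_le_mul_of_nonneg_left hle (by positivity)).trans (le_of_eq ?_)
        field_simp
        norm_num
      have h3 : 0 < A * (1 / 2 : ℝ) ^ n := by positivity
      refine (mul_le_mul_of_nonneg_right this h3.le).trans (le_of_eq ?_)
      ring
  funext p
  obtain ⟨θ, t⟩ := p
  have hl : Tendsto (fun n : ℕ => (A * (1 / 2 : ℝ) ^ n) * Real.cosh (((j : ℝ) + 1 / 2) * t))
      atTop (𝓝 ((A * 0) * Real.cosh (((j : ℝ) + 1 / 2) * t))) :=
    ((tendsto_pow_atTop_nhds_zero_of_lt_one (by norm_num) (by norm_num)).const_mul A).mul_const _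
  have := ge_of_tendsto' hl (fun n => hiter n θ t)
  rw [mul_zero, zero_mul] at this
  exact abs_nonpos_iff.1 this

/-- The space of bounded periodic solutions as a submodule. -/
def adSol (V : ℝ × ℝ → ℝ) : Submodule ℝ (ℝ × ℝ → ℝ) where
  carrier := {v : ℝ × ℝ → ℝ |
        (∃ C : ℝ, ∀ p, |v p| ≤ C) ∧
        ContDiff ℝ 2 v ∧
        (∀ θ t : ℝ, v (θ + 2 * Real.pi, t) = v (θ, t)) ∧
        (∀ p, lap2 v p + V p * v p = 0)}
  zero_mem' := by
    refine ⟨⟨0, by simp⟩, contDiff_const, by simp, fun p => ?_⟩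
    have : fderiv ℝ (0 : ℝ × ℝ → ℝ) = fun _ => 0 := by
      funext q; exact fderiv_const_apply (0 : ℝ)
    simp [lap2, this]
  add_mem' := by
    rintro v w ⟨⟨C, hC⟩, hv, hvp, hve⟩ ⟨⟨D, hD⟩, hw, hwp, hwe⟩
    refine ⟨⟨C + D, fun p => (abs_add_le _ _).trans (add_le_add (hC p) (hD p))⟩, hv.add hw,
      fun θ t => by simp [hvp, hwp], fun p => ?_⟩
    have hvd : Differentiable ℝ v := hv.differentiable (by norm_num)
    have hwd : Differentiable ℝ w := hw.differentiable (by norm_num)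
    have hd : ∀ {u : ℝ × ℝ → ℝ} (_ : ContDiff ℝ 2 u) (e : ℝ × ℝ),
        Differentiable ℝ (fun q => fderiv ℝ u q e) := fun hu e =>
      ((hu.fderiv_right (m := 1) (by norm_num)).clm_apply contDiff_const).differentiable (by norm_num)
    have h1 : ∀ e : ℝ × ℝ, (fun q => fderiv ℝ (v + w) q e) =
        (fun q => fderiv ℝ v q e) + (fun q => fderiv ℝ w q e) := by
      intro e; funext q
      rw [fderiv_add (hvd q) (hwd q)]; rfl
    have h2 := hve p
    have h3 := hwe p
    simp only [lap2] at h2 h3 ⊢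
    rw [h1, h1, fderiv_add (hd hv _ p) (hd hw _ p), fderiv_add (hd hv _ p) (hd hw _ p)]
    simp only [ContinuousLinearMap.add_apply, Pi.add_apply]
    linear_combination h2 + h3
  smul_mem' := by
    rintro c v ⟨⟨C, hC⟩, hv, hvp, hve⟩
    refine ⟨⟨|c| * C, fun p => ?_⟩, hv.const_smul c, fun θ t => by simp [hvp], fun p => ?_⟩
    · simp only [Pi.smul_apply, smul_eq_mul, abs_mul]
      exact mul_le_mul_of_nonneg_left (hC p) (abs_nonneg c)
    have hvd : Differentiable ℝ v := hv.differentiable (by norm_num)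
    have hd : ∀ (e : ℝ × ℝ), Differentiable ℝ (fun q => fderiv ℝ v q e) := fun e =>
      ((hv.fderiv_right (m := 1) (by norm_num)).clm_apply contDiff_const).differentiable (by norm_num)
    have h1 : ∀ e : ℝ × ℝ, (fun q => fderiv ℝ (c • v) q e) = c • (fun q => fderiv ℝ v q e) := by
      intro e; funext q
      rw [fderiv_const_smul (hvd q)]; rfl
    have h2 := hve p
    simp only [lap2] at h2 ⊢
    rw [h1, h1, fderiv_const_smul (hd _ p), fderiv_const_smul (hd _ p)]
    simp only [ContinuousLinearMap.smul_apply, Pi.smul_apply, smul_eq_mul]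
    linear_combination c * h2

/-- A linear functional on solutions: integration of `v(·,0)` against `φ`. -/
noncomputable def adL0 (V : ℝ × ℝ → ℝ) (φ : C(ℝ, ℝ)) : adSol V →ₗ[ℝ] ℝ where
  toFun v := ∫ θ in (0:ℝ)..(2 * Real.pi), φ θ * v.1 (θ, 0)
  map_add' := by
    rintro ⟨v, hv⟩ ⟨w, hw⟩
    have h1 : Continuous fun θ : ℝ => φ θ * v (θ, 0) :=
      φ.continuous.mul (hv.2.1.continuous.comp (Continuous.prodMk_left 0))
    have h2 : Continuous fun θ : ℝ => φ θ * w (θ, 0) :=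
      φ.continuous.mul (hw.2.1.continuous.comp (Continuous.prodMk_left 0))
    rw [← intervalIntegral.integral_add (h1.intervalIntegrable _ _) (h2.intervalIntegrable _ _)]
    simp [mul_add]
  map_smul' := by
    rintro c ⟨v, hv⟩
    simp only [RingHom.id_apply, smul_eq_mul]
    rw [← intervalIntegral.integral_const_mul]
    simp [mul_left_comm]

/-- A linear functional on solutions: integration of `∂ₜ v(·,0)` against `φ`. -/
noncomputable def adL1 (V : ℝ × ℝ → ℝ) (φ : C(ℝ, ℝ)) : adSol V →ₗ[ℝ] ℝ where
  toFun v := ∫ θ in (0:ℝ)..(2 * Real.pi), φ θ * fderiv ℝ v.1 (θ, 0) (0, 1)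
  map_add' := by
    rintro ⟨v, hv⟩ ⟨w, hw⟩
    have hd : ∀ {u : ℝ × ℝ → ℝ} (_ : ContDiff ℝ 2 u),
        Continuous (fun θ : ℝ => φ θ * fderiv ℝ u (θ, 0) (0, 1)) := fun {u} hu => by
      have h : Continuous fun q => fderiv ℝ u q (0, 1) :=
        (hu.continuous_fderiv (by norm_num)).clm_apply continuous_const
      exact φ.continuous.mul (h.comp (Continuous.prodMk_left 0))
    rw [← intervalIntegral.integral_add ((hd hv.2.1).intervalIntegrable _ _)
      ((hd hw.2.1).intervalIntegrable _ _)]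
    congr 1
    funext θ
    have e := fderiv_add (hv.2.1.differentiable (by norm_num) ((θ, 0) : ℝ × ℝ))
      (hw.2.1.differentiable (by norm_num) ((θ, 0) : ℝ × ℝ))
    change φ θ * fderiv ℝ (v + w) (θ, 0) (0, 1) = _
    rw [e, ContinuousLinearMap.add_apply, mul_add]
  map_smul' := by
    rintro c ⟨v, hv⟩
    simp only [RingHom.id_apply, smul_eq_mul]
    rw [← intervalIntegral.integral_const_mul]
    congr 1
    funext θ
    have e := fderiv_const_smul (hv.2.1.differentiable (by norm_num) ((θ, 0) : ℝ × ℝ)) c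
    change φ θ * fderiv ℝ (c • v) (θ, 0) (0, 1) = _
    rw [e, ContinuousLinearMap.smul_apply, smul_eq_mul]
    ring

/-- The cosine mode. -/
noncomputable def adCos (n : ℕ) : C(ℝ, ℝ) := ⟨fun θ => Real.cos (n * θ), by fun_prop⟩

/-- The sine mode. -/
noncomputable def adSin (n : ℕ) : C(ℝ, ℝ) := ⟨fun θ => Real.sin (n * θ), by fun_prop⟩

lemma ad_finite {V : ℝ × ℝ → ℝ} (hV : Continuous V) (hVbdd : ∃ C : ℝ, ∀ p, |V p| ≤ C) :
    FiniteDimensional ℝ (adSol V) := by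
  obtain ⟨j, hj⟩ := ad_unique hV hVbdd
  let T : adSol V →ₗ[ℝ] (Fin (j + 1) → ℝ × ℝ × ℝ × ℝ) := LinearMap.pi fun i =>
    (adL0 V (adCos i)).prod ((adL0 V (adSin i)).prod ((adL1 V (adCos i)).prod (adL1 V (adSin i))))
  have hT : Function.Injective T := by
    rw [← LinearMap.ker_eq_bot, LinearMap.ker_eq_bot']
    rintro ⟨v, hv⟩ h0
    have h : ∀ n : ℕ, n ≤ j → adL0 V (adCos n) ⟨v, hv⟩ = 0 ∧ adL0 V (adSin n) ⟨v, hv⟩ = 0 ∧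
        adL1 V (adCos n) ⟨v, hv⟩ = 0 ∧ adL1 V (adSin n) ⟨v, hv⟩ = 0 := by
      intro n hn
      have h1 := congrFun h0 ⟨n, Nat.lt_succ_of_le hn⟩
      simpa [T, Prod.ext_iff] using h1
    apply Subtype.ext
    exact hj v hv.1 hv.2.1 hv.2.2.1 hv.2.2.2 (fun n hn => (h n hn).1) (fun n hn => (h n hn).2.1)
      (fun n hn => (h n hn).2.2.1) (fun n hn => (h n hn).2.2.2)
  exact Module.Finite.of_injective T hT

end

/-- For a bounded continuous potential `V` on the flat cylinder (i.e. `2π`-periodic in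
the first variable on `ℝ²`), the space of bounded `C²` solutions, `2π`-periodic in the
first variable, of the Schrödinger equation `Δv + V v = 0` is finite dimensional. -/
theorem bounded_kernel_of_schrodinger_operator_on_cylinder_finite_dimensional
    (V : ℝ × ℝ → ℝ) (hVcont : Continuous V) (hVbdd : ∃ C : ℝ, ∀ p, |V p| ≤ C)
    (hVper : ∀ θ t : ℝ, V (θ + 2 * Real.pi, t) = V (θ, t)) :
    FiniteDimensional ℝ (Submodule.span ℝ
      {v : ℝ × ℝ → ℝ |
        (∃ C : ℝ, ∀ p, |v p| ≤ C) ∧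
        ContDiff ℝ 2 v ∧
        (∀ θ t : ℝ, v (θ + 2 * Real.pi, t) = v (θ, t)) ∧
        (∀ p, lap2 v p + V p * v p = 0)}) := by
  have h := ad_finite hVcont hVbdd
  rw [← Submodule.span_eq (adSol V)] at h
  exact h
end
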